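/- arXiv:1407.3463 — 3 statements merged into one kernel-verified Lean document; each statement's English description precedes it below -/
import Mathlib

section
/- Let S_pr and S_obs be matrices with Γ_pr = S_pr S_prᵀ and Γ_obs = S_obs S_obsᵀ, and let S_obs⁻¹ G S_pr = Σᵢ δᵢ vᵢ wᵢᵀ be a singular value decomposition with singular values δ₁ ≥ δ₂ ≥ ⋯ ≥ 0, and set ŵᵢ = S_pr wᵢ and v̂ᵢ = S_obs⁻ᵀ vᵢ. Then the matrix A* = Σ_{i=1}^{r} ( δᵢ/(1+δᵢ²) ) ŵᵢ v̂ᵢᵀ has rank at most r and minimizes the Bayes risk E[ ‖A y − x‖²_{Γ_pos⁻¹} ] over all real n×m matrices A of rank at most r, where the expectation is over the joint law of (x, y). -/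
open Matrix MeasureTheory Finset

/-- The density (w.r.t. Lebesgue measure on `ℝⁿ`) of the Gaussian measure `N(μ, Σ)`. -/
noncomputable def gaussianDensity {n : ℕ} (μ : Fin n → ℝ) (S : Matrix (Fin n) (Fin n) ℝ)
    (x : Fin n → ℝ) : ℝ :=
  (2 * Real.pi) ^ (-(n : ℝ) / 2) * S.det ^ (-(1:ℝ) / 2) *
    Real.exp (-(1 / 2) * ((x - μ) ⬝ᵥ (S⁻¹ *ᵥ (x - μ))))

/-- The Gaussian probability measure `N(μ, Σ)` on `ℝⁿ`. -/
noncomputable def gaussianMeasure {n : ℕ} (μ : Fin n → ℝ)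
    (S : Matrix (Fin n) (Fin n) ℝ) : Measure (Fin n → ℝ) :=
  MeasureTheory.volume.withDensity fun x => ENNReal.ofReal (gaussianDensity μ S x)

/-- The joint law of `(x, y)` where `x ~ N(0, Γpr)`, `ε ~ N(0, Γobs)` independent of `x`,
and `y = G x + ε`. -/
noncomputable def jointMeasure {n m : ℕ} (G : Matrix (Fin m) (Fin n) ℝ)
    (Γpr : Matrix (Fin n) (Fin n) ℝ) (Γobs : Matrix (Fin m) (Fin m) ℝ) :
    Measure ((Fin n → ℝ) × (Fin m → ℝ)) :=
  Measure.map (fun p : (Fin n → ℝ) × (Fin m → ℝ) => (p.1, G *ᵥ p.1 + p.2))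
    ((gaussianMeasure 0 Γpr).prod (gaussianMeasure 0 Γobs))

/-- The Bayes risk `E[ ‖A y − x‖²_S ]` of the linear estimator `y ↦ A y`, where the
expectation is over the joint law `P` of `(x, y)`. -/
noncomputable def bayesRisk {n m : ℕ} (P : Measure ((Fin n → ℝ) × (Fin m → ℝ)))
    (S : Matrix (Fin n) (Fin n) ℝ) (A : Matrix (Fin n) (Fin m) ℝ) : ℝ :=
  ∫ p, (A *ᵥ p.2 - p.1) ⬝ᵥ (S *ᵥ (A *ᵥ p.2 - p.1)) ∂P

/-! The Bayes risk depends on the joint law of `(x, y)` only through its second moments. Writing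
an estimator as `A = Spr * B * Sobs⁻¹` and `M = Sobs⁻¹ * G * Spr`, and taking symmetric square
roots `K` of `1 + Mᵀ * M` and `R` of `1 + M * Mᵀ` with `M * K = R * M`, one can complete the
square: the risk of `A` is `‖K * B * R - Mᵀ‖² + n` in the Frobenius norm. Since `B ↦ K * B * R` is
a bijection preserving the rank, the Eckart–Young theorem says that `B` is optimal when `K * B * R`
is the truncated singular value decomposition of `Mᵀ`. As `K` and `R` act on the `i`-th singular
vectors by `√(1 + δᵢ²)`, this `B` has singular values `δᵢ / (1 + δᵢ²)`. -/

/-- The random vector `X` is square integrable under `P`, with second-moment matrix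
`E[X Xᵀ] = C`. -/
structure HasSecondMoments {Ω ι : Type*} [MeasurableSpace Ω] (X : Ω → ι → ℝ) (C : Matrix ι ι ℝ)
    (P : Measure Ω) : Prop where
  memLp : ∀ i, MemLp (fun ω => X ω i) 2 P
  integral_mul : ∀ i j, ∫ ω, X ω i * X ω j ∂P = C i j

namespace HasSecondMoments

variable {Ω ι κ : Type*} [MeasurableSpace Ω] {P : Measure Ω} {X : Ω → ι → ℝ} {C : Matrix ι ι ℝ}

lemma integrable_mul (hX : HasSecondMoments X C P) (i j : ι) :
    Integrable (fun ω => X ω i * X ω j) P :=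
  (hX.memLp i).integrable_mul (hX.memLp j)

lemma mulVec [Fintype ι] (hX : HasSecondMoments X C P) (A : Matrix κ ι ℝ) :
    HasSecondMoments (fun ω => A *ᵥ X ω) (A * C * Aᵀ) P where
  memLp k := memLp_finsetSum _ fun i _ => (hX.memLp i).const_mul (A k i)
  integral_mul k l := by
    have integrable_term (i j : ι) : Integrable (fun ω => A k i * A l j * (X ω i * X ω j)) P :=
      (hX.integrable_mul i j).const_mul _
    calc ∫ ω, (A *ᵥ X ω) k * (A *ᵥ X ω) l ∂P
        = ∫ ω, ∑ i, ∑ j, A k i * A l j * (X ω i * X ω j) ∂P := by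
          simp only [Matrix.mulVec, dotProduct, Finset.sum_mul_sum, mul_mul_mul_comm]
      _ = ∑ i, ∑ j, A k i * A l j * C i j := by
          rw [integral_finsetSum _ fun i _ => integrable_finsetSum _ fun j _ => integrable_term i j]
          refine Finset.sum_congr rfl fun i _ => ?_
          rw [integral_finsetSum _ fun j _ => integrable_term i j]
          simp only [integral_const_mul, hX.integral_mul]
      _ = (A * C * Aᵀ) k l := by
          simp only [Matrix.mul_apply, Matrix.transpose_apply, Finset.sum_mul]
          rw [Finset.sum_comm]
          exact Finset.sum_congr rfl fun j _ => Finset.sum_congr rfl fun i _ => by ring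

lemma integral_quadraticForm [Fintype ι] (hX : HasSecondMoments X C P) (S : Matrix ι ι ℝ) :
    ∫ ω, X ω ⬝ᵥ (S *ᵥ X ω) ∂P = (S * C).trace := by
  have integrable_term (i j : ι) : Integrable (fun ω => S i j * (X ω j * X ω i)) P :=
    (hX.integrable_mul j i).const_mul _
  calc ∫ ω, X ω ⬝ᵥ (S *ᵥ X ω) ∂P
      = ∫ ω, ∑ i, ∑ j, S i j * (X ω j * X ω i) ∂P := by
        simp only [Matrix.mulVec, dotProduct, Finset.mul_sum, mul_comm, mul_left_comm]
    _ = ∑ i, ∑ j, S i j * C j i := by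
        rw [integral_finsetSum _ fun i _ => integrable_finsetSum _ fun j _ => integrable_term i j]
        refine Finset.sum_congr rfl fun i _ => ?_
        rw [integral_finsetSum _ fun j _ => integrable_term i j]
        simp only [integral_const_mul, hX.integral_mul]
    _ = (S * C).trace := by simp only [Matrix.trace, Matrix.diag_apply, Matrix.mul_apply]

lemma of_map {Ω' : Type*} [MeasurableSpace Ω'] {Y : Ω' → ι → ℝ} {f : Ω → Ω'}
    (hf : Measurable f) (hY : Measurable Y) (h : HasSecondMoments (Y ∘ f) C P) :
    HasSecondMoments Y C (P.map f) where
  memLp i := (memLp_map_measure_iff (by fun_prop) hf.aemeasurable).mpr (h.memLp i)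
  integral_mul i j := by
    rw [integral_map hf.aemeasurable (by fun_prop)]
    exact h.integral_mul i j

end HasSecondMoments

lemma hasSecondMoments_pi {ι : Type*} [Fintype ι] [DecidableEq ι] {μ : ι → Measure ℝ}
    [∀ i, IsProbabilityMeasure (μ i)] (memLp_id : ∀ i, MemLp id 2 (μ i))
    (mean : ∀ i, ∫ x, x ∂μ i = 0) (variance : ∀ i, ∫ x, x ^ 2 ∂μ i = 1) :
    HasSecondMoments (fun x => x) (1 : Matrix ι ι ℝ) (Measure.pi μ) where
  memLp i := (memLp_id i).comp_measurePreserving (measurePreserving_eval μ i)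
  integral_mul i j := by
    have integral_eval (k : ι) : ∫ x, x k ∂Measure.pi μ = 0 :=
      (integral_comp_eval (memLp_id k).1).trans (mean k)
    obtain rfl | hij := eq_or_ne i j
    · rw [Matrix.one_apply_eq, ← variance i]
      simp only [← sq]
      exact integral_comp_eval (μ := μ) (i := i) (f := fun x : ℝ => x ^ 2) (by fun_prop)
    · have indep := (ProbabilityTheory.iIndepFun_pi (μ := μ) (X := fun _ x => x)
        fun _ => aemeasurable_id).indepFun hij
      rw [Matrix.one_apply_ne hij]
      refine (indep.integral_fun_mul_eq_mul_integral
        (measurable_pi_apply i).aestronglyMeasurable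
        (measurable_pi_apply j).aestronglyMeasurable).trans ?_
      rw [integral_eval, zero_mul]

lemma measurable_sumElim {ι κ : Type*} :
    Measurable fun p : (ι → ℝ) × (κ → ℝ) => Sum.elim p.1 p.2 :=
  (MeasurableEquiv.sumPiEquivProdPi fun _ : ι ⊕ κ => ℝ).symm.measurable

lemma HasSecondMoments.prod_pi {ι κ : Type*} [Fintype ι] [Fintype κ] {μ : ι ⊕ κ → Measure ℝ}
    [∀ i, SigmaFinite (μ i)] {C : Matrix (ι ⊕ κ) (ι ⊕ κ) ℝ}
    (h : HasSecondMoments (fun x => x) C (Measure.pi μ)) :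
    HasSecondMoments (fun p => Sum.elim p.1 p.2) C
      ((Measure.pi fun i => μ (Sum.inl i)).prod (Measure.pi fun j => μ (Sum.inr j))) := by
  have preserving := measurePreserving_sumPiEquivProdPi μ
  rw [← preserving.map_eq]
  refine .of_map preserving.measurable measurable_sumElim ?_
  convert h using 1
  ext ξ (i | j) <;> rfl

lemma pi_withDensity_ofReal {ι : Type*} [Fintype ι] {α : ι → Type*} [∀ i, MeasurableSpace (α i)]
    {μ : ∀ i, Measure (α i)} [∀ i, SigmaFinite (μ i)] {f : ∀ i, α i → ℝ}
    (hf : ∀ i, Integrable (f i) (μ i)) (f_nonneg : ∀ i x, 0 ≤ f i x) :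
    Measure.pi (fun i => (μ i).withDensity fun x => ENNReal.ofReal (f i x)) =
      (Measure.pi μ).withDensity fun x => ENNReal.ofReal (∏ i, f i (x i)) := by
  have sigmaFinite (i : ι) : SigmaFinite ((μ i).withDensity fun x => ENNReal.ofReal (f i x)) :=
    SigmaFinite.withDensity_ofReal _
  refine Measure.pi_eq fun s hs => ?_
  rw [withDensity_apply _ (MeasurableSet.univ_pi hs), Measure.restrict_pi_pi,
    ← ofReal_integral_eq_lintegral_ofReal
      (Integrable.fintype_prod_dep fun i => (hf i).restrict)
      (ae_of_all _ fun x => Finset.prod_nonneg fun i _ => f_nonneg i (x i)),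
    integral_fintype_prod_eq_prod,
    ENNReal.ofReal_prod_of_nonneg fun i _ => integral_nonneg (f_nonneg i)]
  refine Finset.prod_congr rfl fun i _ => ?_
  rw [withDensity_apply _ (hs i),
    ofReal_integral_eq_lintegral_ofReal (hf i).restrict (ae_of_all _ (f_nonneg i))]

lemma map_withDensity_affine {ι : Type*} [Fintype ι] [DecidableEq ι] {S : Matrix ι ι ℝ}
    (hS : IsUnit S.det) (b : ι → ℝ) {f : (ι → ℝ) → ENNReal} :
    (volume.withDensity fun z => ENNReal.ofReal |S.det| * f (b + S *ᵥ z)).map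
      (fun z => b + S *ᵥ z) = volume.withDensity f := by
  have hasFDerivAt (z : ι → ℝ) :
      HasFDerivAt (fun z => b + S *ᵥ z) (LinearMap.toContinuousLinearMap (toLin' S)) z :=
    (LinearMap.toContinuousLinearMap (toLin' S)).hasFDerivAt.const_add b
  have injective : Function.Injective (fun z => b + S *ᵥ z) :=
    (add_right_injective b).comp (mulVec_injective_of_isUnit ((isUnit_iff_isUnit_det S).mpr hS))
  have surjective : Function.Surjective (fun z => b + S *ᵥ z) :=
    (add_left_surjective b).comp
      (mulVec_surjective_iff_isUnit.mpr ((isUnit_iff_isUnit_det S).mpr hS))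
  have measurable : Measurable (fun z => b + S *ᵥ z) := by fun_prop
  ext s hs
  rw [Measure.map_apply measurable hs, withDensity_apply _ (measurable hs),
    withDensity_apply _ hs]
  conv_rhs => rw [← Set.image_preimage_eq s surjective]
  rw [lintegral_image_eq_lintegral_abs_det_fderiv_mul volume (measurable hs)
    (fun z _ => (hasFDerivAt z).hasFDerivWithinAt) injective.injOn]
  simp [ContinuousLinearMap.det]

lemma prod_gaussianPDFReal {n : ℕ} (z : Fin n → ℝ) :
    ∏ i, ProbabilityTheory.gaussianPDFReal 0 1 (z i) =
      (2 * Real.pi) ^ (-(n : ℝ) / 2) * Real.exp (-(1 / 2) * (z ⬝ᵥ z)) := by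
  have normalizer : (√(2 * Real.pi))⁻¹ ^ n = (2 * Real.pi) ^ (-(n : ℝ) / 2) := by
    rw [Real.sqrt_eq_rpow, ← Real.rpow_neg (by positivity), ← Real.rpow_natCast,
      ← Real.rpow_mul (by positivity)]
    ring_nf
  simp only [ProbabilityTheory.gaussianPDFReal, NNReal.coe_one, mul_one, sub_zero,
    Finset.prod_mul_distrib, Finset.prod_const, Finset.card_univ, Fintype.card_fin, normalizer,
    ← Real.exp_sum, dotProduct, Finset.mul_sum]
  ring_nf

lemma abs_det_mul_gaussianDensity {n : ℕ} {S : Matrix (Fin n) (Fin n) ℝ} (hS : IsUnit S.det)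
    (μ z : Fin n → ℝ) :
    |S.det| * gaussianDensity μ (S * Sᵀ) (μ + S *ᵥ z) =
      ∏ i, ProbabilityTheory.gaussianPDFReal 0 1 (z i) := by
  have det_factor : |S.det| * (S * Sᵀ).det ^ (-(1 : ℝ) / 2) = 1 := by
    rw [Matrix.det_mul, Matrix.det_transpose, ← abs_mul_abs_self, ← sq, ← Real.rpow_natCast,
      ← Real.rpow_mul (abs_nonneg _)]
    norm_num [Real.rpow_neg_one, hS.ne_zero]
  have exponent : (S *ᵥ z) ⬝ᵥ ((S * Sᵀ)⁻¹ *ᵥ (S *ᵥ z)) = z ⬝ᵥ z := by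
    rw [Matrix.mul_inv_rev, ← Matrix.mulVec_mulVec, Matrix.mulVec_mulVec z S⁻¹,
      Matrix.nonsing_inv_mul _ hS, Matrix.one_mulVec, ← Matrix.transpose_nonsing_inv,
      Matrix.mulVec_transpose, dotProduct_comm, ← Matrix.dotProduct_mulVec, Matrix.mulVec_mulVec,
      Matrix.nonsing_inv_mul _ hS, Matrix.one_mulVec]
  rw [gaussianDensity, add_sub_cancel_left, exponent, prod_gaussianPDFReal]
  linear_combination (2 * Real.pi) ^ (-(n : ℝ) / 2) * Real.exp (-(1 / 2) * (z ⬝ᵥ z)) * det_factor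

lemma gaussianMeasure_mul_transpose {n : ℕ} {S : Matrix (Fin n) (Fin n) ℝ} (hS : IsUnit S.det)
    (μ : Fin n → ℝ) :
    gaussianMeasure μ (S * Sᵀ) =
      (Measure.pi fun _ => ProbabilityTheory.gaussianReal 0 1).map (fun z => μ + S *ᵥ z) := by
  have pi_eq : Measure.pi (fun _ : Fin n => ProbabilityTheory.gaussianReal 0 1) =
      volume.withDensity fun z =>
        ENNReal.ofReal (∏ i, ProbabilityTheory.gaussianPDFReal 0 1 (z i)) := by
    rw [ProbabilityTheory.gaussianReal_of_var_ne_zero _ one_ne_zero]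
    exact pi_withDensity_ofReal (fun _ => ProbabilityTheory.integrable_gaussianPDFReal 0 1)
      fun _ => ProbabilityTheory.gaussianPDFReal_nonneg 0 1
  rw [pi_eq, gaussianMeasure, ← map_withDensity_affine hS μ]
  simp only [← ENNReal.ofReal_mul (abs_nonneg _), abs_det_mul_gaussianDensity hS]

/-- The second-moment matrix of `(x, G x + ε)` when `E[x xᵀ] = Γpr`, `E[ε εᵀ] = Γobs` and
`E[x εᵀ] = 0`. -/
def jointCovariance {n m : Type*} [Fintype n] (G : Matrix m n ℝ) (Γpr : Matrix n n ℝ)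
    (Γobs : Matrix m m ℝ) : Matrix (n ⊕ m) (n ⊕ m) ℝ :=
  fromBlocks Γpr (Γpr * Gᵀ) (G * Γpr) (G * Γpr * Gᵀ + Γobs)

lemma isUnit_det_of_posDef_mul_transpose {ι : Type*} [Fintype ι] [DecidableEq ι]
    {S : Matrix ι ι ℝ} (h : (S * Sᵀ).PosDef) : IsUnit S.det :=
  isUnit_of_mul_isUnit_left (det_mul S Sᵀ ▸ (isUnit_iff_isUnit_det _).mp h.isUnit)

lemma exists_eq_mul_transpose_of_posDef {ι : Type*} [Fintype ι] [DecidableEq ι]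
    {Γ : Matrix ι ι ℝ} (hΓ : Γ.PosDef) : ∃ S : Matrix ι ι ℝ, IsUnit S.det ∧ Γ = S * Sᵀ := by
  open scoped MatrixOrder in
  obtain ⟨S, rfl⟩ := CStarAlgebra.nonneg_iff_eq_mul_star_self.mp hΓ.posSemidef.nonneg
  exact ⟨S, isUnit_det_of_posDef_mul_transpose hΓ, rfl⟩

lemma fromBlocks_mul_transpose_eq_jointCovariance {n m : Type*} [Fintype n] [Fintype m]
    (G : Matrix m n ℝ) (S : Matrix n n ℝ) (T : Matrix m m ℝ) :
    fromBlocks S 0 (G * S) T * (fromBlocks S 0 (G * S) T)ᵀ =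
      jointCovariance G (S * Sᵀ) (T * Tᵀ) := by
  simp only [fromBlocks_transpose, fromBlocks_multiply, jointCovariance, transpose_zero,
    transpose_mul, Matrix.mul_zero, Matrix.zero_mul, add_zero, Matrix.mul_assoc]

lemma hasSecondMoments_pi_gaussianReal {ι : Type*} [Fintype ι] [DecidableEq ι] :
    HasSecondMoments (fun x => x) (1 : Matrix ι ι ℝ)
      (Measure.pi fun _ => ProbabilityTheory.gaussianReal 0 1) := by
  refine hasSecondMoments_pi (fun _ => ProbabilityTheory.memLp_id_gaussianReal 2)
    (fun _ => ProbabilityTheory.integral_id_gaussianReal) fun _ => ?_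
  exact (ProbabilityTheory.variance_of_integral_eq_zero aemeasurable_id
    ProbabilityTheory.integral_id_gaussianReal).symm.trans
      ProbabilityTheory.variance_id_gaussianReal

lemma hasSecondMoments_jointMeasure {n m : ℕ} (G : Matrix (Fin m) (Fin n) ℝ)
    {Γpr : Matrix (Fin n) (Fin n) ℝ} (hpr : Γpr.PosDef)
    {Γobs : Matrix (Fin m) (Fin m) ℝ} (hobs : Γobs.PosDef) :
    HasSecondMoments (fun p => Sum.elim p.1 p.2) (jointCovariance G Γpr Γobs)
      (jointMeasure G Γpr Γobs) := by
  obtain ⟨S, hS, rfl⟩ := exists_eq_mul_transpose_of_posDef hpr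
  obtain ⟨T, hT, rfl⟩ := exists_eq_mul_transpose_of_posDef hobs
  simp only [jointMeasure, gaussianMeasure_mul_transpose, hS, hT, zero_add]
  rw [Measure.map_prod_map _ _ (by fun_prop) (by fun_prop),
    Measure.map_map (by fun_prop) (by fun_prop)]
  refine .of_map (by fun_prop) measurable_sumElim ?_
  have joint := hasSecondMoments_pi_gaussianReal.prod_pi.mulVec (fromBlocks S 0 (G * S) T)
  rw [Matrix.mul_one, fromBlocks_mul_transpose_eq_jointCovariance] at joint
  convert joint using 1
  ext ξ (i | j) <;> simp [fromBlocks_mulVec]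

lemma bayesRisk_eq_trace {n m : ℕ} {P : Measure ((Fin n → ℝ) × (Fin m → ℝ))}
    {Cxx : Matrix (Fin n) (Fin n) ℝ} {Cxy : Matrix (Fin n) (Fin m) ℝ}
    {Cyx : Matrix (Fin m) (Fin n) ℝ} {Cyy : Matrix (Fin m) (Fin m) ℝ}
    (h : HasSecondMoments (fun p => Sum.elim p.1 p.2) (fromBlocks Cxx Cxy Cyx Cyy) P)
    (S : Matrix (Fin n) (Fin n) ℝ) (A : Matrix (Fin n) (Fin m) ℝ) :
    bayesRisk P S A = (S * (A * Cyy * Aᵀ - A * Cyx - Cxy * Aᵀ + Cxx)).trace := by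
  have error_eq (p : (Fin n → ℝ) × (Fin m → ℝ)) :
      A *ᵥ p.2 - p.1 = fromCols (-1 : Matrix (Fin n) (Fin n) ℝ) A *ᵥ Sum.elim p.1 p.2 := by
    rw [fromCols_mulVec_sumElim, neg_mulVec, one_mulVec, neg_add_eq_sub]
  have moment_eq : fromCols (-1 : Matrix (Fin n) (Fin n) ℝ) A * fromBlocks Cxx Cxy Cyx Cyy *
      (fromCols (-1 : Matrix (Fin n) (Fin n) ℝ) A)ᵀ = A * Cyy * Aᵀ - A * Cyx - Cxy * Aᵀ + Cxx := by
    rw [transpose_fromCols, fromCols_mul_fromBlocks, fromCols_mul_fromRows]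
    simp only [transpose_neg, transpose_one, Matrix.mul_neg, Matrix.neg_mul, Matrix.mul_one,
      Matrix.one_mul, Matrix.add_mul]
    abel
  simp only [bayesRisk, error_eq]
  rw [(h.mulVec _).integral_quadraticForm, moment_eq]

section Whitening

variable {n m : Type*} [Fintype n] [DecidableEq n] [Fintype m] [DecidableEq m]

lemma transpose_mul_posteriorPrecision_mul {S : Matrix n n ℝ} (hS : IsUnit S.det)
    (T : Matrix m m ℝ) (G : Matrix m n ℝ) :
    Sᵀ * (Gᵀ * (T * Tᵀ)⁻¹ * G + (S * Sᵀ)⁻¹) * S = 1 + (T⁻¹ * G * S)ᵀ * (T⁻¹ * G * S) := by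
  have prior_term : Sᵀ * (S * Sᵀ)⁻¹ * S = 1 := by
    rw [Matrix.mul_inv_rev, mul_nonsing_inv_cancel_left _ _ (by rwa [det_transpose]),
      nonsing_inv_mul _ hS]
  rw [Matrix.mul_add, Matrix.add_mul, prior_term, Matrix.mul_inv_rev, add_comm]
  simp only [transpose_mul, transpose_nonsing_inv, Matrix.mul_assoc]

lemma errorCovariance_eq {S : Matrix n n ℝ} {T : Matrix m m ℝ} {G M : Matrix m n ℝ}
    {A B : Matrix n m ℝ} (hGS : G * S = T * M) (hAT : A * T = S * B) :
    A * (G * (S * Sᵀ) * Gᵀ + T * Tᵀ) * Aᵀ - A * (G * (S * Sᵀ)) - S * Sᵀ * Gᵀ * Aᵀ + S * Sᵀ =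
      S * (B * (1 + M * Mᵀ) * Bᵀ - B * M - (B * M)ᵀ + 1) * Sᵀ := by
  have hAGS : A * (G * S) = S * (B * M) := by
    rw [hGS, ← Matrix.mul_assoc, hAT, Matrix.mul_assoc]
  calc _ = A * (G * S) * (A * (G * S))ᵀ + A * T * (A * T)ᵀ - A * (G * S) * Sᵀ -
          S * (A * (G * S))ᵀ + S * Sᵀ := by
        simp only [transpose_mul, Matrix.mul_add, Matrix.add_mul, Matrix.mul_assoc]
    _ = _ := by
        rw [hAGS, hAT]
        simp only [transpose_mul, Matrix.mul_add, Matrix.add_mul, Matrix.mul_sub, Matrix.sub_mul,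
          Matrix.mul_assoc, Matrix.mul_one]
        abel

lemma complete_square {K : Matrix n n ℝ} {R : Matrix m m ℝ} {M : Matrix m n ℝ}
    (hK : Kᵀ = K) (hR : Rᵀ = R) (hKK : K * K = 1 + Mᵀ * M) (hRR : R * R = 1 + M * Mᵀ)
    (hMK : M * K = R * M) (B : Matrix n m ℝ) :
    K * (B * (1 + M * Mᵀ) * Bᵀ - B * M - (B * M)ᵀ + 1) * K =
      (K * B * R - Mᵀ) * (K * B * R - Mᵀ)ᵀ + 1 := by
  have hKM : K * Mᵀ = Mᵀ * R := by simpa [hK, hR] using congrArg transpose hMK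
  rw [← hRR]
  simp only [transpose_sub, transpose_mul, transpose_transpose, hK, hR, Matrix.mul_add,
    Matrix.mul_sub, Matrix.add_mul, Matrix.sub_mul, Matrix.mul_one, ← Matrix.mul_assoc]
  rw [hKM, hKK, Matrix.mul_assoc _ M K, hMK, ← Matrix.mul_assoc]
  abel

end Whitening

lemma bayesRisk_eq_trace_sub_mul_transpose {n m : ℕ} {P : Measure ((Fin n → ℝ) × (Fin m → ℝ))}
    {S K : Matrix (Fin n) (Fin n) ℝ} {T R : Matrix (Fin m) (Fin m) ℝ}
    {G M : Matrix (Fin m) (Fin n) ℝ}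
    (h : HasSecondMoments (fun p => Sum.elim p.1 p.2) (jointCovariance G (S * Sᵀ) (T * Tᵀ)) P)
    (hS : IsUnit S.det) (hT : IsUnit T.det) (hM : T⁻¹ * G * S = M)
    (hK : Kᵀ = K) (hR : Rᵀ = R) (hKK : K * K = 1 + Mᵀ * M) (hRR : R * R = 1 + M * Mᵀ)
    (hMK : M * K = R * M) (B : Matrix (Fin n) (Fin m) ℝ) :
    bayesRisk P (Gᵀ * (T * Tᵀ)⁻¹ * G + (S * Sᵀ)⁻¹) (S * B * T⁻¹) =
      ((K * B * R - Mᵀ) * (K * B * R - Mᵀ)ᵀ).trace + n := by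
  have hGS : G * S = T * M := by rw [← hM, Matrix.mul_assoc, mul_nonsing_inv_cancel_left _ _ hT]
  set Q := Gᵀ * (T * Tᵀ)⁻¹ * G + (S * Sᵀ)⁻¹
  have whitened_precision : Sᵀ * Q * S = K * K := by
    rw [hKK, ← hM, transpose_mul_posteriorPrecision_mul hS]
  set X := B * (1 + M * Mᵀ) * Bᵀ - B * M - (B * M)ᵀ + 1 with hX
  calc bayesRisk P Q (S * B * T⁻¹) = (Q * (S * X * Sᵀ)).trace := by
        rw [bayesRisk_eq_trace h, errorCovariance_eq hGS (nonsing_inv_mul_cancel_right _ _ hT)]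
    _ = (Sᵀ * Q * S * X).trace := by
        rw [← Matrix.mul_assoc, Matrix.trace_mul_comm]
        simp only [Matrix.mul_assoc]
    _ = (K * X * K).trace := by
        rw [whitened_precision, Matrix.mul_assoc, Matrix.trace_mul_comm]
    _ = ((K * B * R - Mᵀ) * (K * B * R - Mᵀ)ᵀ).trace + n := by
        rw [hX, complete_square hK hR hKK hRR hMK, trace_add, trace_one, Fintype.card_fin]

section ScaleColumns

variable {n m k : Type*} [DecidableEq n] [Fintype k] [DecidableEq k]

/-- For a matrix `W` with orthonormal columns, the operator that multiplies the `i`-th column of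
`W` by `s i` and fixes the orthogonal complement of the column space. -/
def scaleColumns (W : Matrix n k ℝ) (s : k → ℝ) : Matrix n n ℝ :=
  1 + W * diagonal (s - 1) * Wᵀ

lemma transpose_scaleColumns (W : Matrix n k ℝ) (s : k → ℝ) :
    (scaleColumns W s)ᵀ = scaleColumns W s := by
  simp only [scaleColumns, transpose_add, transpose_one, transpose_mul, transpose_transpose,
    diagonal_transpose, Matrix.mul_assoc]

lemma one_add_transpose_mul_svd [Fintype m] {V : Matrix m k ℝ} (hV : Vᵀ * V = 1)
    (W : Matrix n k ℝ) (δ : k → ℝ) :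
    1 + (V * diagonal δ * Wᵀ)ᵀ * (V * diagonal δ * Wᵀ) = scaleColumns W (1 + δ ^ 2) := by
  have cancel : Vᵀ * (V * (diagonal δ * Wᵀ)) = diagonal δ * Wᵀ := by
    rw [← Matrix.mul_assoc, hV, Matrix.one_mul]
  simp only [scaleColumns, transpose_mul, transpose_transpose, diagonal_transpose,
    Matrix.mul_assoc, cancel, add_sub_cancel_left]
  rw [← Matrix.mul_assoc (diagonal δ), diagonal_mul_diagonal, sq]
  rfl

variable [Fintype n]

lemma scaleColumns_mul {W : Matrix n k ℝ} (hW : Wᵀ * W = 1) (s : k → ℝ) :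
    scaleColumns W s * W = W * diagonal s := by
  calc scaleColumns W s * W = W * (1 + diagonal (s - 1)) := by
        rw [scaleColumns, Matrix.add_mul, Matrix.mul_assoc, hW, Matrix.mul_add, Matrix.one_mul,
          Matrix.mul_one, Matrix.mul_one]
    _ = W * diagonal s := by
        rw [← diagonal_one, diagonal_add]
        simp

lemma transpose_mul_scaleColumns {W : Matrix n k ℝ} (hW : Wᵀ * W = 1) (s : k → ℝ) :
    Wᵀ * scaleColumns W s = diagonal s * Wᵀ := by
  simpa only [transpose_mul, transpose_scaleColumns, diagonal_transpose]
    using congrArg transpose (scaleColumns_mul hW s)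

lemma scaleColumns_mul_scaleColumns {W : Matrix n k ℝ} (hW : Wᵀ * W = 1) (s t : k → ℝ) :
    scaleColumns W s * scaleColumns W t = scaleColumns W (s * t) := by
  calc scaleColumns W s * scaleColumns W t
      = scaleColumns W s + scaleColumns W s * W * diagonal (t - 1) * Wᵀ := by
        conv_lhs => rw [scaleColumns.eq_def W t]
        rw [Matrix.mul_add, Matrix.mul_one]
        simp only [Matrix.mul_assoc]
    _ = 1 + W * (diagonal (s - 1) + diagonal s * diagonal (t - 1)) * Wᵀ := by
        rw [scaleColumns_mul hW, scaleColumns]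
        simp only [Matrix.mul_add, Matrix.add_mul, Matrix.mul_assoc, add_assoc]
    _ = scaleColumns W (s * t) := by
        rw [scaleColumns, diagonal_mul_diagonal, diagonal_add]
        congr 4 with i
        simp only [Pi.sub_apply, Pi.mul_apply, Pi.one_apply]
        ring

lemma sq_scaleColumns_sqrt [Fintype m] {V : Matrix m k ℝ} {W : Matrix n k ℝ} (hV : Vᵀ * V = 1)
    (hW : Wᵀ * W = 1) (δ : k → ℝ) :
    scaleColumns W (fun i => √(1 + δ i ^ 2)) * scaleColumns W (fun i => √(1 + δ i ^ 2)) =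
      1 + (V * diagonal δ * Wᵀ)ᵀ * (V * diagonal δ * Wᵀ) := by
  rw [scaleColumns_mul_scaleColumns hW, one_add_transpose_mul_svd hV]
  congr 1 with i
  exact Real.mul_self_sqrt (by positivity)

lemma svd_mul_scaleColumns [Fintype m] [DecidableEq m] {V : Matrix m k ℝ} {W : Matrix n k ℝ}
    (hV : Vᵀ * V = 1) (hW : Wᵀ * W = 1) (δ s : k → ℝ) :
    V * diagonal δ * Wᵀ * scaleColumns W s = scaleColumns V s * (V * diagonal δ * Wᵀ) := by
  calc V * diagonal δ * Wᵀ * scaleColumns W s = V * (diagonal δ * diagonal s) * Wᵀ := by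
        rw [Matrix.mul_assoc, transpose_mul_scaleColumns hW]
        simp only [Matrix.mul_assoc]
    _ = V * (diagonal s * diagonal δ) * Wᵀ := by rw [(commute_diagonal δ s).eq]
    _ = scaleColumns V s * (V * diagonal δ * Wᵀ) := by
        simp only [← Matrix.mul_assoc, scaleColumns_mul hV]

end ScaleColumns

section LowRank

variable {n m k : Type*} [Fintype n]

lemma posSemidef_of_isStarProjection {P : Matrix n n ℝ} (hP : IsStarProjection P) :
    P.PosSemidef := by
  classical
  open scoped MatrixOrder in exact nonneg_iff_posSemidef.mp hP.nonneg

lemma transpose_eq_of_isStarProjection {P : Matrix n n ℝ} (hP : IsStarProjection P) : Pᵀ = P :=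
  hP.isSelfAdjoint

lemma trace_mul_mul_transpose_of_isStarProjection [Fintype m] {P : Matrix n n ℝ}
    (hP : IsStarProjection P) (X : Matrix n m ℝ) :
    (P * (X * Xᵀ)).trace = (P * X * (P * X)ᵀ).trace := by
  rw [transpose_mul, transpose_eq_of_isStarProjection hP, ← Matrix.mul_assoc (P * X),
    Matrix.trace_mul_comm _ P]
  simp only [← Matrix.mul_assoc, hP.isIdempotentElem.eq]

lemma trace_mul_mul_transpose_nonneg [Fintype m] {P : Matrix n n ℝ} (hP : IsStarProjection P)
    (X : Matrix n m ℝ) : 0 ≤ (P * (X * Xᵀ)).trace :=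
  trace_mul_mul_transpose_of_isStarProjection hP X ▸
    (posSemidef_self_mul_conjTranspose (P * X)).trace_nonneg

lemma exists_isStarProjection_toEuclideanLin_eq [DecidableEq n]
    (U : Submodule ℝ (EuclideanSpace ℝ n)) :
    ∃ P : Matrix n n ℝ, IsStarProjection P ∧ toEuclideanLin P = U.starProjection.toLinearMap := by
  let toCLM := toEuclideanCLM (n := n) (𝕜 := ℝ)
  have injective : Function.Injective toCLM := EquivLike.injective toCLM
  have hU := isStarProjection_starProjection (U := U)
  obtain ⟨P, hP⟩ : ∃ P, toCLM P = U.starProjection := EquivLike.surjective toCLM _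
  refine ⟨P, ⟨injective ?_, injective ?_⟩, congrArg ContinuousLinearMap.toLinearMap hP⟩
  · rw [map_mul, hP, hU.isIdempotentElem.eq]
  · rw [map_star, hP, hU.isSelfAdjoint.star_eq]

lemma exists_isStarProjection_mul_eq_self [Fintype m] (C : Matrix n m ℝ) :
    ∃ P : Matrix n n ℝ, IsStarProjection P ∧ P * C = C ∧ P.trace = C.rank := by
  classical
  set U := LinearMap.range (toEuclideanLin C)
  obtain ⟨P, hP, hPU⟩ := exists_isStarProjection_toEuclideanLin_eq U
  have isProj : LinearMap.IsProj U (toEuclideanLin P) := by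
    rw [hPU]
    exact ⟨U.starProjection_apply_mem, fun x => Submodule.starProjection_eq_self_iff.mpr⟩
  refine ⟨P, hP, toEuclideanLin.injective (LinearMap.ext fun x => ?_), ?_⟩
  · calc toEuclideanLin (P * C) x = toEuclideanLin P (toEuclideanLin C x) := by
          simp only [toLpLin_apply, mulVec_mulVec]
      _ = toEuclideanLin C x := isProj.map_id _ (LinearMap.mem_range_self _ x)
  · let b := (EuclideanSpace.basisFun n ℝ).toBasis
    let c := (EuclideanSpace.basisFun m ℝ).toBasis
    calc P.trace = LinearMap.trace ℝ _ (toEuclideanLin P) := by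
          rw [toEuclideanLin_eq_toLin_orthonormal, trace_toLin_eq]
      _ = Module.finrank ℝ U := isProj.trace
      _ = C.rank := by
          rw [rank_eq_finrank_range_toLin C b c, ← toEuclideanLin_eq_toLin_orthonormal]

lemma trace_one_sub_mul_le_of_mul_eq_self [DecidableEq n] [Fintype m] {P : Matrix n n ℝ}
    (hP : IsStarProjection P) {C : Matrix n m ℝ} (hPC : P * C = C) (N : Matrix n m ℝ) :
    ((1 - P) * (N * Nᵀ)).trace ≤ ((C - N) * (C - N)ᵀ).trace := by
  have residual : (1 - P) * (C - N) = -((1 - P) * N) := by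
    rw [Matrix.mul_sub, Matrix.sub_mul 1 P C, Matrix.one_mul, hPC, sub_self, zero_sub]
  calc ((1 - P) * (N * Nᵀ)).trace = ((1 - P) * ((C - N) * (C - N)ᵀ)).trace := by
        simp only [trace_mul_mul_transpose_of_isStarProjection hP.one_sub, residual,
          transpose_neg, Matrix.neg_mul, Matrix.mul_neg, neg_neg]
    _ ≤ ((C - N) * (C - N)ᵀ).trace := by
        rw [Matrix.sub_mul, Matrix.one_mul, trace_sub, sub_le_self_iff]
        exact trace_mul_mul_transpose_nonneg hP (C - N)

variable [DecidableEq k]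

lemma transpose_mul_mul_apply_mem_Icc [Finite k] {P : Matrix n n ℝ} (hP : IsStarProjection P)
    {W : Matrix n k ℝ} (hW : Wᵀ * W = 1) (i : k) : (Wᵀ * P * W) i i ∈ Set.Icc (0 : ℝ) 1 := by
  classical
  have diag_nonneg {Q : Matrix n n ℝ} (hQ : IsStarProjection Q) : 0 ≤ (Wᵀ * Q * W) i i :=
    ((posSemidef_of_isStarProjection hQ).conjTranspose_mul_mul_same W).diag_nonneg
  have complement : (Wᵀ * (1 - P : Matrix n n ℝ) * W) i i = 1 - (Wᵀ * P * W) i i := by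
    rw [Matrix.mul_sub, Matrix.sub_mul, Matrix.mul_one, hW, Matrix.sub_apply, one_apply_eq]
  exact ⟨diag_nonneg hP, sub_nonneg.mp (complement ▸ diag_nonneg hP.one_sub)⟩

variable [Fintype k]

lemma isStarProjection_mul_transpose {W : Matrix n k ℝ} (hW : Wᵀ * W = 1) :
    IsStarProjection (W * Wᵀ) where
  isIdempotentElem := by
    rw [IsIdempotentElem, Matrix.mul_assoc, ← Matrix.mul_assoc Wᵀ, hW, Matrix.one_mul]
  isSelfAdjoint := by
    rw [IsSelfAdjoint, star_eq_conjTranspose, conjTranspose_eq_transpose_of_trivial,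
      transpose_mul, transpose_transpose]

lemma trace_transpose_mul_mul_le {P : Matrix n n ℝ} (hP : IsStarProjection P)
    {W : Matrix n k ℝ} (hW : Wᵀ * W = 1) : (Wᵀ * P * W).trace ≤ P.trace := by
  classical
  have h := trace_mul_mul_transpose_nonneg (isStarProjection_mul_transpose hW).one_sub P
  rw [transpose_eq_of_isStarProjection hP, hP.isIdempotentElem.eq, Matrix.sub_mul,
    Matrix.one_mul, trace_sub, sub_nonneg] at h
  rwa [Matrix.mul_assoc, Matrix.trace_mul_comm, Matrix.mul_assoc, Matrix.trace_mul_comm]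

end LowRank

section EckartYoung

/-- The first `r` entries of `δ`, the others being replaced by `0`. -/
def truncate {k : ℕ} (r : ℕ) (δ : Fin k → ℝ) : Fin k → ℝ :=
  fun i => if (i : ℕ) < r then δ i else 0

lemma sum_truncate {k : ℕ} (r : ℕ) (δ : Fin k → ℝ) :
    ∑ i, truncate r δ i = ∑ i with (i : Fin k).val < r, δ i :=
  (Finset.sum_filter _ _).symm

lemma card_filter_val_lt_le (k r : ℕ) : #{i : Fin k | i.val < r} ≤ r := by
  rw [Fin.card_filter_val_lt]
  exact min_le_right _ _

lemma sum_mul_le_sum_truncate {k r : ℕ} {f p : Fin k → ℝ} (hf : Antitone f) (f_nonneg : 0 ≤ f)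
    (hp : ∀ i, p i ∈ Set.Icc 0 1) (sum_le : ∑ i, p i ≤ r) :
    ∑ i, f i * p i ≤ ∑ i, truncate r f i := by
  by_cases hr : r < k
  · set t := f ⟨r, hr⟩
    have termwise (i : Fin k) : (f i - t) * p i ≤ truncate r f i - truncate r (fun _ => t) i := by
      unfold truncate
      split_ifs with hi
      · have : t ≤ f i := hf hi.le
        exact mul_le_of_le_one_right (sub_nonneg.mpr this) (hp i).2
      · have : f i ≤ t := hf (not_lt.mp hi)
        rw [sub_zero]
        exact mul_nonpos_of_nonpos_of_nonneg (sub_nonpos.mpr this) (hp i).1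
    have sum_threshold : ∑ i, truncate r (fun _ : Fin k => t) i = r * t := by
      rw [sum_truncate, Finset.sum_const, Fin.card_filter_val_lt, min_eq_right hr.le, nsmul_eq_mul]
    have total := Finset.sum_le_sum fun i (_ : i ∈ Finset.univ) => termwise i
    simp only [sub_mul, Finset.sum_sub_distrib, ← Finset.mul_sum, sum_threshold] at total
    have := mul_le_mul_of_nonneg_left sum_le (f_nonneg ⟨r, hr⟩)
    linarith
  · refine Finset.sum_le_sum fun i _ => ?_
    rw [truncate, if_pos (i.2.trans_le (not_lt.mp hr))]
    exact mul_le_of_le_one_right (f_nonneg i) (hp i).2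

lemma rank_mul_diagonal_truncate_mul_le {n m : Type*} [Finite n] [Fintype m] {k : ℕ} (r : ℕ)
    (W : Matrix n (Fin k) ℝ) (δ : Fin k → ℝ) (V : Matrix (Fin k) m ℝ) :
    (W * diagonal (truncate r δ) * V).rank ≤ r := by
  refine ((rank_mul_le_left _ _).trans (rank_mul_le_right _ _)).trans ?_
  rw [rank_diagonal, Fintype.card_subtype]
  refine le_trans (Finset.card_le_card fun i => ?_) (card_filter_val_lt_le k r)
  simp +contextual [truncate]

variable {n m k : Type*} [Fintype n] [Fintype m] [Fintype k] [DecidableEq k]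

lemma trace_mul_svd_mul_transpose {V : Matrix m k ℝ} (hV : Vᵀ * V = 1) (W : Matrix n k ℝ)
    (Q : Matrix n n ℝ) (s : k → ℝ) :
    (Q * (W * diagonal s * Vᵀ * (W * diagonal s * Vᵀ)ᵀ)).trace =
      ∑ i, s i ^ 2 * (Wᵀ * Q * W) i i := by
  calc (Q * (W * diagonal s * Vᵀ * (W * diagonal s * Vᵀ)ᵀ)).trace
      = (Q * W * diagonal s * (Vᵀ * V) * (diagonal s * Wᵀ)).trace := by
        simp only [transpose_mul, transpose_transpose, diagonal_transpose, Matrix.mul_assoc]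
    _ = (diagonal s * diagonal s * (Wᵀ * Q * W)).trace := by
        rw [hV, Matrix.mul_one, Matrix.mul_assoc _ _ (_ * _), Matrix.trace_mul_comm]
        simp only [Matrix.mul_assoc]
    _ = ∑ i, s i ^ 2 * (Wᵀ * Q * W) i i := by
        simp only [diagonal_mul_diagonal, trace, diag_apply, diagonal_mul, sq]

lemma trace_svd_mul_transpose {V : Matrix m k ℝ} (hV : Vᵀ * V = 1) {W : Matrix n k ℝ}
    (hW : Wᵀ * W = 1) (s : k → ℝ) :
    (W * diagonal s * Vᵀ * (W * diagonal s * Vᵀ)ᵀ).trace = ∑ i, s i ^ 2 := by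
  classical
  have h := trace_mul_svd_mul_transpose hV W 1 s
  simpa only [Matrix.one_mul, Matrix.mul_one, hW, one_apply_eq, mul_one] using h

end EckartYoung

/- Let `P` be the projection onto the range of `C` and `p i = ⟨w i, P w i⟩`. Then `C` misses at
least the mass `∑ i, δ i ^ 2 * (1 - p i)` of the SVD, where `p i ∈ [0, 1]` and `∑ i, p i ≤ r`. -/
theorem eckart_young {n m : Type*} [Fintype n] [Fintype m] {k r : ℕ} {V : Matrix m (Fin k) ℝ}
    {W : Matrix n (Fin k) ℝ} (hV : Vᵀ * V = 1) (hW : Wᵀ * W = 1) {δ : Fin k → ℝ}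
    (δ_nonneg : 0 ≤ δ) (hδ : Antitone δ) {C : Matrix n m ℝ} (hC : C.rank ≤ r) :
    ((W * diagonal (truncate r δ) * Vᵀ - W * diagonal δ * Vᵀ) *
        (W * diagonal (truncate r δ) * Vᵀ - W * diagonal δ * Vᵀ)ᵀ).trace ≤
      ((C - W * diagonal δ * Vᵀ) * (C - W * diagonal δ * Vᵀ)ᵀ).trace := by
  classical
  obtain ⟨P, hP, hPC, trace_P⟩ := exists_isStarProjection_mul_eq_self C
  set N := W * diagonal δ * Vᵀ
  set p : Fin k → ℝ := fun i => (Wᵀ * P * W) i i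
  have sum_p_le : ∑ i, p i ≤ r :=
    (trace_transpose_mul_mul_le hP hW).trans (trace_P.trans_le (Nat.cast_le.mpr hC))
  have captured_le : ∑ i, δ i ^ 2 * p i ≤ ∑ i, truncate r (δ ^ 2) i :=
    sum_mul_le_sum_truncate (fun i j hij => pow_le_pow_left₀ (δ_nonneg j) (hδ hij) 2)
      (fun i => sq_nonneg (δ i)) (transpose_mul_mul_apply_mem_Icc hP hW) sum_p_le
  have truncation_error (i : Fin k) :
      (truncate r δ i - δ i) ^ 2 = δ i ^ 2 - truncate r (δ ^ 2) i := by
    unfold truncate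
    split_ifs <;> simp
  calc _ = (W * diagonal (truncate r δ - δ) * Vᵀ *
          (W * diagonal (truncate r δ - δ) * Vᵀ)ᵀ).trace := by
        rw [← Matrix.sub_mul, ← Matrix.mul_sub, diagonal_sub]
        rfl
    _ = ∑ i, δ i ^ 2 - ∑ i, truncate r (δ ^ 2) i := by
        rw [trace_svd_mul_transpose hV hW, ← Finset.sum_sub_distrib]
        exact Finset.sum_congr rfl fun i _ => truncation_error i
    _ ≤ ∑ i, δ i ^ 2 - ∑ i, δ i ^ 2 * p i := sub_le_sub_left captured_le _
    _ = ((1 - P) * (N * Nᵀ)).trace := by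
        rw [Matrix.sub_mul, Matrix.one_mul, trace_sub, trace_svd_mul_transpose hV hW,
          trace_mul_svd_mul_transpose hV]
    _ ≤ ((C - N) * (C - N)ᵀ).trace := trace_one_sub_mul_le_of_mul_eq_self hP hPC N

lemma scaleColumns_mul_svd_mul_scaleColumns {n m k : Type*} [Fintype n] [DecidableEq n]
    [Fintype m] [DecidableEq m] [Fintype k] [DecidableEq k] {V : Matrix m k ℝ} {W : Matrix n k ℝ}
    (hV : Vᵀ * V = 1) (hW : Wᵀ * W = 1) (s d t : k → ℝ) :
    scaleColumns W s * (W * diagonal d * Vᵀ) * scaleColumns V t =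
      W * diagonal (s * d * t) * Vᵀ := by
  calc scaleColumns W s * (W * diagonal d * Vᵀ) * scaleColumns V t
      = scaleColumns W s * W * diagonal d * (Vᵀ * scaleColumns V t) := by
        simp only [Matrix.mul_assoc]
    _ = W * (diagonal s * diagonal d * diagonal t) * Vᵀ := by
        rw [scaleColumns_mul hW, transpose_mul_scaleColumns hV]
        simp only [Matrix.mul_assoc]
    _ = W * diagonal (s * d * t) * Vᵀ := by
        rw [diagonal_mul_diagonal, diagonal_mul_diagonal]
        rfl

lemma sqrt_mul_truncate_mul_sqrt {k : ℕ} (r : ℕ) (δ : Fin k → ℝ) :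
    (fun i => √(1 + δ i ^ 2)) * truncate r (fun i => δ i / (1 + δ i ^ 2)) *
      (fun i => √(1 + δ i ^ 2)) = truncate r δ := by
  ext i
  have sq_sqrt : √(1 + δ i ^ 2) * √(1 + δ i ^ 2) = 1 + δ i ^ 2 :=
    Real.mul_self_sqrt (by positivity)
  simp only [Pi.mul_apply, truncate]
  split_ifs
  · rw [mul_right_comm, sq_sqrt, mul_div_cancel₀ _ (by positivity)]
  · simp

section BayesRiskSVD

variable {n m k : ℕ} {P : Measure ((Fin n → ℝ) × (Fin m → ℝ))} {S : Matrix (Fin n) (Fin n) ℝ}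
  {T : Matrix (Fin m) (Fin m) ℝ} {G : Matrix (Fin m) (Fin n) ℝ} {V : Matrix (Fin m) (Fin k) ℝ}
  {W : Matrix (Fin n) (Fin k) ℝ} {δ : Fin k → ℝ}

lemma bayesRisk_eq_of_svd
    (h : HasSecondMoments (fun p => Sum.elim p.1 p.2) (jointCovariance G (S * Sᵀ) (T * Tᵀ)) P)
    (hS : IsUnit S.det) (hT : IsUnit T.det) (hV : Vᵀ * V = 1) (hW : Wᵀ * W = 1)
    (hsvd : T⁻¹ * G * S = V * diagonal δ * Wᵀ) (B : Matrix (Fin n) (Fin m) ℝ) :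
    let σ : Fin k → ℝ := fun i => √(1 + δ i ^ 2)
    let E := scaleColumns W σ * B * scaleColumns V σ - W * diagonal δ * Vᵀ
    bayesRisk P (Gᵀ * (T * Tᵀ)⁻¹ * G + (S * Sᵀ)⁻¹) (S * B * T⁻¹) = (E * Eᵀ).trace + n := by
  have transpose_svd : (V * diagonal δ * Wᵀ)ᵀ = W * diagonal δ * Vᵀ := by
    simp only [transpose_mul, transpose_transpose, diagonal_transpose, Matrix.mul_assoc]
  have sq_right := sq_scaleColumns_sqrt hW hV δ
  rw [← transpose_svd, transpose_transpose] at sq_right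
  intro σ _
  have risk := bayesRisk_eq_trace_sub_mul_transpose h hS hT hsvd (transpose_scaleColumns W σ)
    (transpose_scaleColumns V σ) (sq_scaleColumns_sqrt hV hW δ) sq_right
    (svd_mul_scaleColumns hV hW δ σ) B
  rwa [transpose_svd] at risk

theorem bayesRisk_truncated_svd_le {r : ℕ}
    (h : HasSecondMoments (fun p => Sum.elim p.1 p.2) (jointCovariance G (S * Sᵀ) (T * Tᵀ)) P)
    (hS : IsUnit S.det) (hT : IsUnit T.det) (hV : Vᵀ * V = 1) (hW : Wᵀ * W = 1)
    (hsvd : T⁻¹ * G * S = V * diagonal δ * Wᵀ) (δ_nonneg : 0 ≤ δ) (hδ : Antitone δ)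
    {A : Matrix (Fin n) (Fin m) ℝ} (hA : A.rank ≤ r) :
    bayesRisk P (Gᵀ * (T * Tᵀ)⁻¹ * G + (S * Sᵀ)⁻¹)
        (S * (W * diagonal (truncate r fun i => δ i / (1 + δ i ^ 2)) * Vᵀ) * T⁻¹) ≤
      bayesRisk P (Gᵀ * (T * Tᵀ)⁻¹ * G + (S * Sᵀ)⁻¹) A := by
  have unwhiten : S * (S⁻¹ * A * T) * T⁻¹ = A := by
    rw [← Matrix.mul_assoc, mul_nonsing_inv_cancel_left _ _ hS, mul_nonsing_inv_cancel_right _ _ hT]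
  have rank_le (K : Matrix (Fin n) (Fin n) ℝ) (R : Matrix (Fin m) (Fin m) ℝ) :
      (K * (S⁻¹ * A * T) * R).rank ≤ r :=
    calc (K * (S⁻¹ * A * T) * R).rank ≤ (S⁻¹ * A * T).rank :=
          (rank_mul_le_left _ _).trans (rank_mul_le_right _ _)
      _ ≤ A.rank := (rank_mul_le_left _ _).trans (rank_mul_le_right _ _)
      _ ≤ r := hA
  conv_rhs => rw [← unwhiten]
  simp only [bayesRisk_eq_of_svd h hS hT hV hW hsvd, scaleColumns_mul_svd_mul_scaleColumns hV hW,
    sqrt_mul_truncate_mul_sqrt]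
  gcongr
  exact eckart_young hV hW δ_nonneg hδ (rank_le _ _)

end BayesRiskSVD

section OuterProducts

lemma sum_smul_vecMulVec {R n m k : Type*} [CommSemiring R] [Fintype k] [DecidableEq k]
    (s : k → R) (v : k → m → R) (w : k → n → R) :
    ∑ i, s i • vecMulVec (v i) (w i) = (of v)ᵀ * diagonal s * of w := by
  ext a b
  rw [Matrix.sum_apply, Matrix.mul_apply]
  simp only [Matrix.smul_apply, vecMulVec_apply, mul_diagonal, transpose_apply, of_apply,
    smul_eq_mul]
  exact Finset.sum_congr rfl fun i _ => by ring

lemma of_mul_transpose_of_eq_one {R n k : Type*} [NonAssocSemiring R] [Fintype n] [DecidableEq k]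
    {w : k → n → R} (hw : ∀ i j, w i ⬝ᵥ w j = if i = j then 1 else 0) :
    of w * (of w)ᵀ = 1 :=
  ext fun i j => (hw i j).trans (one_apply ..).symm

lemma sum_filter_smul_vecMulVec_mulVec {n m : Type*} [Fintype n] [Fintype m] {k : ℕ} (r : ℕ)
    (c : Fin k → ℝ) (v : Fin k → m → ℝ) (w : Fin k → n → ℝ) (S : Matrix n n ℝ)
    (T : Matrix m m ℝ) :
    ∑ i with (i : Fin k).val < r, c i • vecMulVec (S *ᵥ w i) (Tᵀ *ᵥ v i) =
      S * ((of w)ᵀ * diagonal (truncate r c) * of v) * T := by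
  rw [← sum_smul_vecMulVec, Finset.sum_filter, Matrix.mul_sum, Matrix.sum_mul]
  refine Finset.sum_congr rfl fun i _ => ?_
  rw [Matrix.mul_smul, Matrix.smul_mul, mul_vecMulVec, vecMulVec_mul, mulVec_transpose, truncate,
    ite_smul, zero_smul]

end OuterProducts

lemma inv_inv_posteriorPrecision {n m : Type*} [Fintype n] [DecidableEq n] [Fintype m]
    [DecidableEq m] {Γpr : Matrix n n ℝ} {Γobs : Matrix m m ℝ} (hpr : Γpr.PosDef)
    (hobs : Γobs.PosDef) (G : Matrix m n ℝ) :
    (Gᵀ * Γobs⁻¹ * G + Γpr⁻¹)⁻¹⁻¹ = Gᵀ * Γobs⁻¹ * G + Γpr⁻¹ := by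
  have posDef : (Gᵀ * Γobs⁻¹ * G + Γpr⁻¹).PosDef :=
    hpr.inv.posSemidef_add (hobs.inv.posSemidef.conjTranspose_mul_mul_same G)
  exact nonsing_inv_nonsing_inv _ ((isUnit_iff_isUnit_det _).mp posDef.isUnit)

theorem optimal_low_rank_posterior_mean_general {n m k r : ℕ}
    {P : Measure ((Fin n → ℝ) × (Fin m → ℝ))} {G : Matrix (Fin m) (Fin n) ℝ}
    {Γobs Sobs : Matrix (Fin m) (Fin m) ℝ} {Γpr Γpos Spr : Matrix (Fin n) (Fin n) ℝ}
    (hP : HasSecondMoments (fun p => Sum.elim p.1 p.2) (jointCovariance G Γpr Γobs) P)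
    (hobs : Γobs.PosDef) (hpr : Γpr.PosDef) (hΓpos : Γpos = (Gᵀ * Γobs⁻¹ * G + Γpr⁻¹)⁻¹)
    (hSpr : Γpr = Spr * Sprᵀ) (hSobs : Γobs = Sobs * Sobsᵀ)
    {δ : Fin k → ℝ} {v : Fin k → Fin m → ℝ} {w : Fin k → Fin n → ℝ}
    (δ_nonneg : 0 ≤ δ) (hδ : Antitone δ)
    (hv : ∀ i j, v i ⬝ᵥ v j = if i = j then 1 else 0)
    (hw : ∀ i j, w i ⬝ᵥ w j = if i = j then 1 else 0)
    (hsvd : Sobs⁻¹ * G * Spr = ∑ i, δ i • vecMulVec (v i) (w i))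
    {Astar : Matrix (Fin n) (Fin m) ℝ}
    (hAstar : Astar = ∑ i with (i : Fin k).val < r,
      (δ i / (1 + δ i ^ 2)) • vecMulVec (Spr *ᵥ w i) ((Sobs⁻¹)ᵀ *ᵥ v i)) :
    Astar.rank ≤ r ∧ ∀ A : Matrix (Fin n) (Fin m) ℝ, A.rank ≤ r →
      bayesRisk P Γpos⁻¹ Astar ≤ bayesRisk P Γpos⁻¹ A := by
  rw [sum_filter_smul_vecMulVec_mulVec] at hAstar
  rw [sum_smul_vecMulVec] at hsvd
  rw [hΓpos, inv_inv_posteriorPrecision hpr hobs, hAstar]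
  subst hSpr hSobs
  refine ⟨?_, fun A hA => ?_⟩
  · exact ((rank_mul_le_left _ _).trans (rank_mul_le_right _ _)).trans
      (rank_mul_diagonal_truncate_mul_le r _ _ _)
  · exact bayesRisk_truncated_svd_le (V := (of v)ᵀ) (W := (of w)ᵀ) hP
      (isUnit_det_of_posDef_mul_transpose hpr) (isUnit_det_of_posDef_mul_transpose hobs)
      (of_mul_transpose_of_eq_one hv) (of_mul_transpose_of_eq_one hw) hsvd δ_nonneg hδ hA

/-- Theorem 4.1 (i): the matrix `A* = Σ_{i≤r} (δᵢ/(1+δᵢ²)) ŵᵢ v̂ᵢᵀ` has rank at most `r`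
and minimizes the Bayes risk `E‖A y − x‖²_{Γpos⁻¹}` over all matrices of rank at most `r`. -/
theorem optimal_low_rank_posterior_mean
    (n m r : ℕ) (hn : 0 < n) (hm : 0 < m) (hr : r ≤ min m n)
    (G : Matrix (Fin m) (Fin n) ℝ)
    (Γobs : Matrix (Fin m) (Fin m) ℝ) (hobs : Γobs.PosDef)
    (Γpr : Matrix (Fin n) (Fin n) ℝ) (hpr : Γpr.PosDef)
    (Γpos : Matrix (Fin n) (Fin n) ℝ)
    (hΓpos : Γpos = (Gᵀ * Γobs⁻¹ * G + Γpr⁻¹)⁻¹)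
    (Spr : Matrix (Fin n) (Fin n) ℝ) (hSpr : Γpr = Spr * Sprᵀ)
    (Sobs : Matrix (Fin m) (Fin m) ℝ) (hSobs : Γobs = Sobs * Sobsᵀ)
    (δ : Fin (min m n) → ℝ)
    (v : Fin (min m n) → Fin m → ℝ) (w : Fin (min m n) → Fin n → ℝ)
    (hδ : ∀ i, 0 ≤ δ i)
    (hord : ∀ i j : Fin (min m n), i ≤ j → δ j ≤ δ i)
    (hv : ∀ i j, v i ⬝ᵥ v j = if i = j then (1:ℝ) else 0)
    (hw : ∀ i j, w i ⬝ᵥ w j = if i = j then (1:ℝ) else 0)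
    (hsvd : Sobs⁻¹ * G * Spr =
      ∑ i : Fin (min m n), δ i • vecMulVec (v i) (w i))
    (Astar : Matrix (Fin n) (Fin m) ℝ)
    (hAstar : Astar = ∑ i ∈ Finset.univ.filter (fun i : Fin (min m n) => (i : ℕ) < r),
      (δ i / (1 + (δ i) ^ 2)) • vecMulVec (Spr *ᵥ w i) ((Sobs⁻¹)ᵀ *ᵥ v i)) :
    Astar.rank ≤ r ∧
      ∀ A : Matrix (Fin n) (Fin m) ℝ, A.rank ≤ r →
        bayesRisk (jointMeasure G Γpr Γobs) Γpos⁻¹ Astar ≤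
          bayesRisk (jointMeasure G Γpr Γobs) Γpos⁻¹ A :=
  optimal_low_rank_posterior_mean_general (hasSecondMoments_jointMeasure G hpr hobs)
    hobs hpr hΓpos hSpr hSobs hδ hord hv hw hsvd hAstar
end

section
/- Let Γ_y = Γ_obs + G Γ_pr Gᵀ, and let S_pos and S_y be invertible matrices with Γ_pos = S_pos S_posᵀ and Γ_y = S_y S_yᵀ. Then for every real n×m matrix A, the expected squared error to the posterior mean satisfies E[ ‖A y − μ_pos(y)‖²_{Γ_pos⁻¹} ] = ‖ S_pos⁻¹ ( A − Γ_pos Gᵀ Γ_obs⁻¹ ) S_y ‖²_F, where ‖·‖_F is the Frobenius norm and the expectation is over the marginal law of y, which is N(0, Γ_y). -/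
open Matrix MeasureTheory Finset

/-- The squared Frobenius norm of a matrix. -/
def frobSq {n m : ℕ} (M : Matrix (Fin n) (Fin m) ℝ) : ℝ :=
  ∑ i, ∑ j, (M i j) ^ 2

/-!
Write `y = S_y z` with `z` a standard normal vector, and let `K` be the gain of the posterior mean.
Since `Γ_pos⁻¹ = S_pos⁻ᵀ S_pos⁻¹`, the error is `‖S_pos⁻¹ (A - K) S_y z‖²`. The coordinates of `z`
are independent with mean zero and unit variance, so `E ‖B z‖² = ‖B‖_F²` for every matrix `B`: each
row of `B z` has second moment equal to its variance, and variances of independent summands add.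
-/

open ProbabilityTheory

section ProductDensity

variable {ι : Type*} {X : ι → Type*} [∀ i, MeasurableSpace (X i)]
  {μ : ∀ i, Measure (X i)} [∀ i, SigmaFinite (μ i)] {f : ∀ i, X i → ENNReal}

lemma lmarginal_prod_eq_prod [DecidableEq ι] (hf : ∀ i, Measurable (f i)) (s : Finset ι) :
    ∫⋯∫⁻_s, (fun x ↦ ∏ i ∈ s, f i (x i)) ∂μ = fun _ ↦ ∏ i ∈ s, ∫⁻ x, f i x ∂μ i := by
  induction s using Finset.induction_on with
  | empty => simp only [prod_empty, lmarginal_empty]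
  | insert i s hi ih =>
    have integrate_coordinate (x : ∀ i, X i) :
        ∫⁻ t, ∏ j ∈ insert i s, f j (Function.update x i t j) ∂μ i =
          (∫⁻ t, f i t ∂μ i) * ∏ j ∈ s, f j (x j) := by
      rw [← lintegral_mul_const _ (hf i)]
      refine lintegral_congr fun t ↦ ?_
      rw [prod_insert hi, Function.update_self]
      congr 1
      exact prod_congr rfl fun j hj ↦ by rw [Function.update_of_ne (ne_of_mem_of_not_mem hj hi)]
    rw [lmarginal_insert' _ (by fun_prop) hi]
    ext x
    simp_rw [integrate_coordinate]
    rw [prod_insert hi, ← congrFun ih x]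
    exact lintegral_const_mul _ (by fun_prop)

variable [Fintype ι]

lemma lintegral_fintype_prod_eq_prod (hf : ∀ i, Measurable (f i)) :
    ∫⁻ x, ∏ i, f i (x i) ∂Measure.pi μ = ∏ i, ∫⁻ x, f i x ∂μ i := by
  classical
  rcases isEmpty_or_nonempty (∀ i, X i) with hX | ⟨⟨x⟩⟩
  · obtain ⟨i, hi⟩ := isEmpty_pi.1 hX
    rw [lintegral_of_isEmpty, prod_eq_zero (mem_univ i) (lintegral_of_isEmpty (μ i) (f i))]
  · rw [lintegral_eq_lmarginal_univ x, lmarginal_prod_eq_prod hf]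

lemma pi_withDensity [∀ i, SigmaFinite ((μ i).withDensity (f i))] (hf : ∀ i, Measurable (f i)) :
    Measure.pi (fun i ↦ (μ i).withDensity (f i)) =
      (Measure.pi μ).withDensity fun x ↦ ∏ i, f i (x i) := by
  refine Measure.pi_eq fun s hs ↦ ?_
  rw [withDensity_apply _ (.univ_pi hs), Measure.restrict_pi_pi,
    lintegral_fintype_prod_eq_prod hf]
  exact prod_congr rfl fun i _ ↦ (withDensity_apply _ (hs i)).symm

end ProductDensity

lemma pi_gaussianReal {ι : Type*} [Fintype ι] (μ : ι → ℝ) {v : ι → NNReal} (hv : ∀ i, v i ≠ 0) :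
    Measure.pi (fun i ↦ gaussianReal (μ i) (v i)) =
      volume.withDensity fun x ↦ ∏ i, gaussianPDF (μ i) (v i) (x i) := by
  have hpdf (i : ι) := gaussianReal_of_var_ne_zero (μ i) (hv i)
  have (i : ι) : SigmaFinite (volume.withDensity (gaussianPDF (μ i) (v i))) :=
    hpdf i ▸ inferInstance
  simp_rw [hpdf]
  exact pi_withDensity fun i ↦ measurable_gaussianPDF (μ i) (v i)

section SecondMoments

variable {ι : Type*} [Fintype ι] {ν : ι → Measure ℝ} [∀ i, IsProbabilityMeasure (ν i)]

lemma memLp_dotProduct_pi {p : ENNReal} (hν : ∀ i, MemLp id p (ν i)) (c : ι → ℝ) :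
    MemLp (fun z ↦ c ⬝ᵥ z) p (Measure.pi ν) :=
  memLp_finsetSum _ fun i _ ↦
    ((hν i).comp_measurePreserving (measurePreserving_eval ν i)).const_mul (c i)

lemma integral_dotProduct_pi (hν : ∀ i, Integrable id (ν i)) (c : ι → ℝ) :
    ∫ z, c ⬝ᵥ z ∂Measure.pi ν = c ⬝ᵥ fun i ↦ ∫ x, x ∂ν i := by
  simp only [dotProduct]
  rw [integral_finsetSum _ fun i _ ↦ (integrable_eval (hν i)).const_mul (c i)]
  refine sum_congr rfl fun i _ ↦ ?_
  rw [integral_const_mul,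
    integral_comp_eval (X := fun _ ↦ ℝ) (f := fun x ↦ x) (hν i).aestronglyMeasurable]

lemma variance_dotProduct_pi (hν : ∀ i, MemLp id 2 (ν i)) (c : ι → ℝ) :
    Var[fun z ↦ c ⬝ᵥ z; Measure.pi ν] = ∑ i, c i ^ 2 * Var[id; ν i] := by
  have h := variance_sum_pi fun i ↦ (hν i).const_mul (c i)
  simp_rw [variance_const_mul] at h
  rw [← h]
  congr 1
  ext z
  simp [dotProduct]

lemma integral_dotProduct_sq_pi (hν : ∀ i, MemLp id 2 (ν i)) (hmean : ∀ i, ∫ x, x ∂ν i = 0)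
    (c : ι → ℝ) : ∫ z, (c ⬝ᵥ z) ^ 2 ∂Measure.pi ν = ∑ i, c i ^ 2 * Var[id; ν i] := by
  have hzero : ∫ z, c ⬝ᵥ z ∂Measure.pi ν = 0 := by
    rw [integral_dotProduct_pi (fun i ↦ (hν i).integrable one_le_two)]
    simp [hmean, dotProduct]
  rw [← variance_dotProduct_pi hν,
    variance_of_integral_eq_zero (memLp_dotProduct_pi hν c).aemeasurable hzero]

lemma integral_mulVec_dotProduct_self_pi {κ : Type*} [Fintype κ] (hν : ∀ i, MemLp id 2 (ν i))
    (hmean : ∀ i, ∫ x, x ∂ν i = 0) (B : Matrix κ ι ℝ) :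
    ∫ z, (B *ᵥ z) ⬝ᵥ (B *ᵥ z) ∂Measure.pi ν = ∑ k, ∑ i, B k i ^ 2 * Var[id; ν i] := by
  simp_rw [← integral_dotProduct_sq_pi hν hmean]
  rw [← integral_finsetSum _ fun k _ ↦ (memLp_dotProduct_pi hν (B k)).integrable_sq]
  simp only [dotProduct, mulVec, sq]

end SecondMoments

lemma integral_mulVec_dotProduct_self_pi_gaussianReal {n m : ℕ} (B : Matrix (Fin n) (Fin m) ℝ) :
    ∫ z, (B *ᵥ z) ⬝ᵥ (B *ᵥ z) ∂Measure.pi (fun _ ↦ gaussianReal 0 1) = frobSq B := by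
  rw [integral_mulVec_dotProduct_self_pi (fun _ ↦ memLp_id_gaussianReal 2)
    fun _ ↦ integral_id_gaussianReal]
  simp [frobSq]

lemma dotProduct_inv_mul_transpose_mulVec {ι R : Type*} [Fintype ι] [DecidableEq ι] [CommRing R]
    (S : Matrix ι ι R) (v : ι → R) :
    v ⬝ᵥ ((S * Sᵀ)⁻¹ *ᵥ v) = (S⁻¹ *ᵥ v) ⬝ᵥ (S⁻¹ *ᵥ v) := by
  rw [Matrix.mul_inv_rev, ← mulVec_mulVec, ← transpose_nonsing_inv, dotProduct_mulVec,
    vecMul_transpose]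

lemma det_mul_transpose_rpow_neg_half {ι : Type*} [Fintype ι] [DecidableEq ι]
    (S : Matrix ι ι ℝ) : (S * Sᵀ).det ^ (-(1 : ℝ) / 2) = |S.det|⁻¹ := by
  rw [det_mul, det_transpose, neg_div, Real.rpow_neg (mul_self_nonneg _), ← Real.sqrt_eq_rpow,
    Real.sqrt_mul_self_eq_abs]

lemma prod_gaussianPDFReal_zero_one {ι : Type*} [Fintype ι] (z : ι → ℝ) :
    ∏ i, gaussianPDFReal 0 1 (z i) =
      (2 * Real.pi) ^ (-(Fintype.card ι : ℝ) / 2) * Real.exp (-(1 / 2) * (z ⬝ᵥ z)) := by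
  have hconst : (√(2 * Real.pi))⁻¹ ^ Fintype.card ι =
      (2 * Real.pi) ^ (-(Fintype.card ι : ℝ) / 2) := by
    rw [Real.sqrt_eq_rpow, ← Real.rpow_neg (by positivity), ← Real.rpow_natCast,
      ← Real.rpow_mul (by positivity)]
    ring_nf
  have hexp : ∑ i, -z i ^ 2 / 2 = -(1 / 2) * (z ⬝ᵥ z) := by
    rw [dotProduct, mul_sum]
    exact sum_congr rfl fun i _ ↦ by ring
  simp only [gaussianPDFReal, NNReal.coe_one, mul_one, sub_zero, prod_mul_distrib, prod_const,
    card_univ, hconst, ← Real.exp_sum, hexp]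

section GaussianMeasure

variable {m : ℕ} {S : Matrix (Fin m) (Fin m) ℝ}

lemma abs_det_mul_gaussianDensity_add_mulVec (hS : IsUnit S.det) (μ z : Fin m → ℝ) :
    |S.det| * gaussianDensity μ (S * Sᵀ) (μ + S *ᵥ z) = ∏ i, gaussianPDFReal 0 1 (z i) := by
  have hdet : |S.det| ≠ 0 := abs_ne_zero.2 hS.ne_zero
  rw [gaussianDensity, add_sub_cancel_left, dotProduct_inv_mul_transpose_mulVec, mulVec_mulVec,
    nonsing_inv_mul _ hS, one_mulVec, det_mul_transpose_rpow_neg_half,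
    prod_gaussianPDFReal_zero_one, Fintype.card_fin]
  field_simp

lemma gaussianMeasure_mul_transpose_eq_map (hS : IsUnit S.det) (μ : Fin m → ℝ) :
    gaussianMeasure μ (S * Sᵀ) =
      (Measure.pi fun _ ↦ gaussianReal 0 1).map fun z ↦ μ + S *ᵥ z := by
  set φ : (Fin m → ℝ) → Fin m → ℝ := fun z ↦ μ + S *ᵥ z
  have hφ : Continuous φ := by fun_prop
  have hSunit : IsUnit S := (isUnit_iff_isUnit_det S).2 hS
  have hinj : φ.Injective := (add_right_injective μ).comp (mulVec_injective_iff_isUnit.2 hSunit)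
  have hsurj : φ.Surjective := (add_left_surjective μ).comp (mulVec_surjective_iff_isUnit.2 hSunit)
  have hderiv (z : Fin m → ℝ) : HasFDerivAt φ S.toLin'.toContinuousLinearMap z :=
    S.toLin'.toContinuousLinearMap.hasFDerivAt.const_add μ
  have hdensity (z : Fin m → ℝ) :
      ENNReal.ofReal |S.det| * ENNReal.ofReal (gaussianDensity μ (S * Sᵀ) (φ z)) =
        ∏ i, gaussianPDF 0 1 (z i) := by
    rw [← ENNReal.ofReal_mul (abs_nonneg _), abs_det_mul_gaussianDensity_add_mulVec hS,
      ENNReal.ofReal_prod_of_nonneg fun i _ ↦ gaussianPDFReal_nonneg 0 1 (z i)]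
    rfl
  ext s hs
  rw [Measure.map_apply hφ.measurable hs, pi_gaussianReal _ fun _ ↦ one_ne_zero,
    withDensity_apply _ (hφ.measurable hs), gaussianMeasure, withDensity_apply _ hs,
    ← Set.image_preimage_eq s hsurj,
    lintegral_image_eq_lintegral_abs_det_fderiv_mul volume (hφ.measurable hs)
      (fun z _ ↦ (hderiv z).hasFDerivWithinAt) hinj.injOn, Set.image_preimage_eq s hsurj]
  simp_rw [LinearMap.det_toContinuousLinearMap, LinearMap.det_toLin', hdensity]

lemma integral_mulVec_dotProduct_self_gaussianMeasure {k : ℕ} (hS : IsUnit S.det)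
    (B : Matrix (Fin k) (Fin m) ℝ) :
    ∫ y, (B *ᵥ y) ⬝ᵥ (B *ᵥ y) ∂gaussianMeasure 0 (S * Sᵀ) = frobSq (B * S) := by
  rw [gaussianMeasure_mul_transpose_eq_map hS, integral_map (by fun_prop) (by fun_prop),
    ← integral_mulVec_dotProduct_self_pi_gaussianReal]
  simp_rw [zero_add, mulVec_mulVec]

end GaussianMeasure

theorem expected_error_to_posterior_mean_eq_frobenius_general {k n m : ℕ}
    (R : Matrix (Fin k) (Fin n) ℝ) {S : Matrix (Fin m) (Fin m) ℝ} (hS : IsUnit S.det)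
    (A K : Matrix (Fin n) (Fin m) ℝ) :
    ∫ y, (A *ᵥ y - K *ᵥ y) ⬝ᵥ ((Rᵀ * R) *ᵥ (A *ᵥ y - K *ᵥ y)) ∂gaussianMeasure 0 (S * Sᵀ) =
      frobSq (R * (A - K) * S) := by
  rw [← integral_mulVec_dotProduct_self_gaussianMeasure hS]
  simp_rw [← sub_mulVec, ← mulVec_mulVec, dotProduct_mulVec _ Rᵀ, vecMul_transpose]

/-- Equation (A.5): for any matrix `A`, the expected squared error to the posterior mean,
over the marginal law `N(0, Γy)` of the data, equals the squared Frobenius norm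
`‖Spos⁻¹ (A − Γpos Gᵀ Γobs⁻¹) Sy‖²_F`. -/
theorem expected_error_to_posterior_mean_eq_frobenius
    (n m : ℕ) (hn : 0 < n) (hm : 0 < m)
    (G : Matrix (Fin m) (Fin n) ℝ)
    (Γobs : Matrix (Fin m) (Fin m) ℝ) (hobs : Γobs.PosDef)
    (Γpr : Matrix (Fin n) (Fin n) ℝ) (hpr : Γpr.PosDef)
    (Γpos : Matrix (Fin n) (Fin n) ℝ)
    (hΓpos : Γpos = (Gᵀ * Γobs⁻¹ * G + Γpr⁻¹)⁻¹)
    (Γy : Matrix (Fin m) (Fin m) ℝ)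
    (hΓy : Γy = Γobs + G * Γpr * Gᵀ)
    (Spos : Matrix (Fin n) (Fin n) ℝ) (hSposInv : IsUnit Spos.det)
    (hSpos : Γpos = Spos * Sposᵀ)
    (Sy : Matrix (Fin m) (Fin m) ℝ) (hSyInv : IsUnit Sy.det)
    (hSy : Γy = Sy * Syᵀ)
    (μpos : (Fin m → ℝ) → (Fin n → ℝ))
    (hμpos : ∀ y, μpos y = (Γpos * Gᵀ * Γobs⁻¹) *ᵥ y)
    (A : Matrix (Fin n) (Fin m) ℝ) :
    ∫ y, (A *ᵥ y - μpos y) ⬝ᵥ (Γpos⁻¹ *ᵥ (A *ᵥ y - μpos y)) ∂(gaussianMeasure 0 Γy) =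
      frobSq (Spos⁻¹ * (A - Γpos * Gᵀ * Γobs⁻¹) * Sy) := by
  have hprecision : Γpos⁻¹ = Spos⁻¹ᵀ * Spos⁻¹ := by
    rw [hSpos, Matrix.mul_inv_rev, transpose_nonsing_inv]
  simpa only [hprecision, hμpos, hSy] using
    expected_error_to_posterior_mean_eq_frobenius_general Spos⁻¹ hSyInv A (Γpos * Gᵀ * Γobs⁻¹)
end

section
/- Let D = diag(d₁²,…,dₙ²) with d₁² ≥ d₂² ≥ ⋯ ≥ dₙ² ≥ 0, let f ∈ 𝓤, and define 𝒥 : ℝ^{n×r} → ℝ by 𝒥(U) = Σ_{i=1}^{n} f(σᵢ), where σ₁,…,σₙ are the generalized eigenvalues of the pencil (U Uᵀ + I, D + I). Then 𝒥 attains a global minimum on ℝ^{n×r}, and there is a minimizer Û of 𝒥 such that Û Ûᵀ = Σ_{i=1}^{r} dᵢ² eᵢ eᵢᵀ, where e₁,…,eₙ are the standard basis vectors of ℝⁿ. -/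
open Matrix Finset

/-- `σ` enumerates (with multiplicity) the generalized eigenvalues of the pencil `(A, B)`,
i.e. the eigenvalues of `B⁻¹ * A`. -/
def IsGenEigs {n : ℕ} (A B : Matrix (Fin n) (Fin n) ℝ) (σ : Fin n → ℝ) : Prop :=
  (B⁻¹ * A).charpoly = ∏ i : Fin n, (Polynomial.X - Polynomial.C (σ i))

/-- Membership in the class 𝓤. -/
def MemU (f : ℝ → ℝ) : Prop :=
  ∃ f' : ℝ → ℝ,
    (∀ x ∈ Set.Ioi (0:ℝ), HasDerivAt f (f' x) x) ∧
    ContinuousOn f' (Set.Ioi (0:ℝ)) ∧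
    (∀ x ∈ Set.Ioi (0:ℝ), x ≠ 1 → f' x * (1 - x) < 0) ∧
    Filter.Tendsto f Filter.atTop Filter.atTop

/-!
Scaling by `(D + 1)^(-1/2)` turns the pencil `(U Uᵀ + 1, D + 1)` into the symmetric matrix
`(D + 1)⁻¹ + W Wᵀ` with `rank W ≤ r`. By Weyl's inequality its `k`-th smallest eigenvalue is at most
`bₖ₊ᵣ`, where `b₁ ≤ ⋯ ≤ bₙ ≤ 1` are the diagonal entries of `(D + 1)⁻¹`. Since `f` decreases on
`(0, 1]`, that eigenvalue costs at least `f (bₖ₊ᵣ)`, and each of the last `r` eigenvalues costs at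
least `f 1`. The minimizer replaces `b₁, …, bᵣ` by `1` and so attains all these bounds at once.
-/

section Weyl

variable {𝕜 E F ι : Type*} [RCLike 𝕜] [NormedAddCommGroup E] [InnerProductSpace 𝕜 E] [Fintype ι]

theorem re_inner_map_self_eq_sum {T : E →ₗ[𝕜] E} (u : OrthonormalBasis ι 𝕜 E) {μ : ι → ℝ}
    (hu : ∀ i, T (u i) = (μ i : 𝕜) • u i) (x : E) :
    RCLike.re (inner 𝕜 x (T x)) = ∑ i, μ i * ‖inner 𝕜 (u i) x‖ ^ 2 := by
  have map_eq : T x = ∑ i, ((μ i : 𝕜) * inner 𝕜 (u i) x) • u i := by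
    conv_lhs => rw [← u.sum_repr' x]
    simp only [map_sum, map_smul, hu, smul_smul, mul_comm]
  rw [map_eq, inner_sum, map_sum]
  refine Finset.sum_congr rfl fun i _ ↦ ?_
  rw [inner_smul_right, mul_assoc, RCLike.re_ofReal_mul, inner_mul_symm_re_eq_norm, norm_mul,
    norm_inner_symm x, sq]

theorem mul_norm_sq_le_re_inner_map_self {T : E →ₗ[𝕜] E} (u : OrthonormalBasis ι 𝕜 E) {μ : ι → ℝ}
    (hu : ∀ i, T (u i) = (μ i : 𝕜) • u i) {c : ℝ} {x : E}
    (hc : ∀ i, inner 𝕜 (u i) x ≠ 0 → c ≤ μ i) :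
    c * ‖x‖ ^ 2 ≤ RCLike.re (inner 𝕜 x (T x)) := by
  rw [re_inner_map_self_eq_sum u hu, ← u.sum_sq_norm_inner_right, Finset.mul_sum]
  refine Finset.sum_le_sum fun i _ ↦ ?_
  obtain hx | hx := eq_or_ne (inner 𝕜 (u i) x) 0
  · simp [hx]
  · exact mul_le_mul_of_nonneg_right (hc i hx) (sq_nonneg _)

theorem re_inner_map_self_le_mul_norm_sq {T : E →ₗ[𝕜] E} (u : OrthonormalBasis ι 𝕜 E) {μ : ι → ℝ}
    (hu : ∀ i, T (u i) = (μ i : 𝕜) • u i) {c : ℝ} {x : E}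
    (hc : ∀ i, inner 𝕜 (u i) x ≠ 0 → μ i ≤ c) :
    RCLike.re (inner 𝕜 x (T x)) ≤ c * ‖x‖ ^ 2 := by
  have neg_bound := mul_norm_sq_le_re_inner_map_self (T := -T) (μ := -μ) (c := -c) (x := x) u
    (fun i ↦ by simp [hu]) fun i hi ↦ neg_le_neg (hc i hi)
  simpa using neg_bound

theorem exists_ne_zero_map_eq_zero_and_inner_eq_zero [FiniteDimensional 𝕜 E] [AddCommGroup F]
    [Module 𝕜 F] (L : E →ₗ[𝕜] F) (u : ι → E)
    (h : Module.finrank 𝕜 (LinearMap.range L) + Fintype.card ι < Module.finrank 𝕜 E) :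
    ∃ x ≠ 0, L x = 0 ∧ ∀ i, inner 𝕜 (u i) x = 0 := by
  let constraints := L.rangeRestrict.prod (LinearMap.pi fun i ↦ innerₛₗ 𝕜 (u i))
  have ker_ne_bot : LinearMap.ker constraints ≠ ⊥ := by
    apply LinearMap.ker_ne_bot_of_finrank_lt
    simpa only [Module.finrank_prod, Module.finrank_fintype_fun_eq_card] using h
  obtain ⟨x, hx, hx0⟩ := (Submodule.ne_bot_iff _).1 ker_ne_bot
  obtain ⟨hL, hu⟩ := Prod.ext_iff.1 (LinearMap.mem_ker.1 hx)
  exact ⟨x, hx0, congrArg Subtype.val hL, congrFun hu⟩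

/- The subspaces spanned by `u k, …, u (n - 1)` and by `v 0, …, v l`, and the kernel of `S - T`,
have total codimension at most `k + (n - 1 - l) + r < n`, so they share a nonzero vector, on which
the two quadratic forms agree. -/
theorem eigenvalue_le_of_finrank_range_sub_le {n r : ℕ} {S T : E →ₗ[𝕜] E}
    (u v : OrthonormalBasis (Fin n) 𝕜 E) {μ ν : Fin n → ℝ}
    (hu : ∀ i, S (u i) = (μ i : 𝕜) • u i) (hv : ∀ i, T (v i) = (ν i : 𝕜) • v i)
    (hμ : Monotone μ) (hν : Monotone ν)
    (hr : Module.finrank 𝕜 (LinearMap.range (S - T)) ≤ r)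
    {k l : Fin n} (hkl : (k : ℕ) + r ≤ l) : μ k ≤ ν l := by
  have : FiniteDimensional 𝕜 E := u.toBasis.finiteDimensional_of_finite
  have finrank_eq : Module.finrank 𝕜 E = n := by
    simpa using Module.finrank_eq_card_basis u.toBasis
  obtain ⟨x, hx0, hST, hx⟩ := exists_ne_zero_map_eq_zero_and_inner_eq_zero (S - T)
    (Sum.elim (fun i : Set.Iio k ↦ u i) (fun i : Set.Ioi l ↦ v i)) (by
      simp only [Fintype.card_sum, Fintype.card_Iio, Fintype.card_Ioi, Fin.card_Iio, Fin.card_Ioi,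
        finrank_eq]
      omega)
  obtain ⟨hxu, hxv⟩ := Sum.forall.1 hx
  have lower : μ k * ‖x‖ ^ 2 ≤ RCLike.re (inner 𝕜 x (S x)) :=
    mul_norm_sq_le_re_inner_map_self u hu fun i hi ↦
      hμ (not_lt.1 fun hik ↦ hi (hxu ⟨i, hik⟩))
  have upper : RCLike.re (inner 𝕜 x (T x)) ≤ ν l * ‖x‖ ^ 2 :=
    re_inner_map_self_le_mul_norm_sq v hv fun i hi ↦
      hν (not_lt.1 fun hli ↦ hi (hxv ⟨i, hli⟩))
  rw [sub_eq_zero.1 hST] at lower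
  exact le_of_mul_le_mul_right (lower.trans upper) (by positivity)

theorem eigenvalues_sort_le_of_rank_sub_diagonal_le {n r : ℕ} {M : Matrix (Fin n) (Fin n) 𝕜}
    (hM : M.IsHermitian) {b : Fin n → ℝ} (hb : Monotone b)
    (hr : (M - diagonal fun i ↦ (b i : 𝕜)).rank ≤ r) {k l : Fin n} (hkl : (k : ℕ) + r ≤ l) :
    hM.eigenvalues (Tuple.sort hM.eigenvalues k) ≤ b l := by
  refine eigenvalue_le_of_finrank_range_sub_le (S := toEuclideanLin M)
    (T := toEuclideanLin (diagonal fun i ↦ (b i : 𝕜)))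
    (hM.eigenvectorBasis.reindex (Tuple.sort hM.eigenvalues).symm)
    (EuclideanSpace.basisFun (Fin n) 𝕜) (fun i ↦ ?_) (fun i ↦ ?_)
    (Tuple.monotone_sort hM.eigenvalues) hb ?_ hkl
  · rw [OrthonormalBasis.reindex_apply, Equiv.symm_symm, toLpLin_apply, hM.mulVec_eigenvectorBasis,
      WithLp.toLp_smul, RCLike.real_smul_eq_coe_smul (K := 𝕜), WithLp.toLp_ofLp,
      Function.comp_apply]
  · simp only [EuclideanSpace.basisFun_apply, toLpLin_apply, PiLp.ofLp_single,
      diagonal_mulVec_single, mul_one]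
    ext j
    simp [Pi.single_apply, RCLike.real_smul_eq_coe_mul]
  · rw [← map_sub, toEuclideanLin_eq_toLin_orthonormal, ← rank_eq_finrank_range_toLin]
    exact hr

end Weyl

section Pencil

variable {n : ℕ} {A B : Matrix (Fin n) (Fin n) ℝ} {σ τ : Fin n → ℝ}

theorem IsGenEigs.map_eq_charpoly_roots (h : IsGenEigs A B σ) :
    univ.val.map σ = (B⁻¹ * A).charpoly.roots := by
  have roots_eq := Polynomial.roots_multiset_prod_X_sub_C (univ.val.map σ)
  rw [Multiset.map_map] at roots_eq
  rw [h]
  exact roots_eq.symm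

theorem IsGenEigs.sum_comp_eq (hσ : IsGenEigs A B σ) (hτ : IsGenEigs A B τ) {M : Type*}
    [AddCommMonoid M] (f : ℝ → M) : ∑ i, f (σ i) = ∑ i, f (τ i) := by
  have map_eq := hσ.map_eq_charpoly_roots.trans hτ.map_eq_charpoly_roots.symm
  simpa only [Multiset.map_map] using! congrArg (fun s ↦ (s.map f).sum) map_eq

theorem IsGenEigs.comp_perm (h : IsGenEigs A B σ) (p : Equiv.Perm (Fin n)) :
    IsGenEigs A B (σ ∘ p) :=
  h.trans (Equiv.prod_comp p fun i ↦ Polynomial.X - Polynomial.C (σ i)).symm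

theorem isGenEigs_eigenvalues {S : Matrix (Fin n) (Fin n) ℝ} (hS : S * S = B⁻¹)
    (h : (S * A * S).IsHermitian) : IsGenEigs A B h.eigenvalues := by
  rw [IsGenEigs, ← hS, Matrix.mul_assoc, charpoly_mul_comm]
  exact h.charpoly_eq

theorem inv_diagonal_of_ne_zero {ι K : Type*} [Fintype ι] [DecidableEq ι] [Field K] {b : ι → K}
    (hb : ∀ i, b i ≠ 0) : (diagonal b)⁻¹ = diagonal fun i ↦ (b i)⁻¹ := by
  refine inv_eq_right_inv ?_
  simp [diagonal_mul_diagonal, hb]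

theorem isGenEigs_diagonal (a : Fin n → ℝ) {b : Fin n → ℝ} (hb : ∀ i, b i ≠ 0) :
    IsGenEigs (diagonal a) (diagonal b) fun i ↦ (b i)⁻¹ * a i := by
  rw [IsGenEigs, inv_diagonal_of_ne_zero hb, diagonal_mul_diagonal, charpoly_diagonal]

theorem exists_isGenEigs_le_inv {κ : Type*} [Fintype κ] (U : Matrix (Fin n) κ ℝ) {b : Fin n → ℝ}
    (hb : ∀ i, 0 < b i) (hanti : Antitone b) :
    ∃ τ, IsGenEigs (U * Uᵀ + 1) (diagonal b) τ ∧ (∀ i, 0 < τ i) ∧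
      ∀ k l : Fin n, (k : ℕ) + Fintype.card κ ≤ l → τ k ≤ (b l)⁻¹ := by
  let S : Matrix (Fin n) (Fin n) ℝ := diagonal fun i ↦ √(b i)⁻¹
  have S_mul_S : S * S = diagonal fun i ↦ (b i)⁻¹ := by
    simp only [S, diagonal_mul_diagonal, Real.mul_self_sqrt (inv_pos.2 (hb _)).le]
  have conj_eq : S * (U * Uᵀ + 1) * S = diagonal (fun i ↦ (b i)⁻¹) + S * U * (S * U)ᴴ := by
    rw [conjTranspose_eq_transpose_of_trivial, transpose_mul, diagonal_transpose, mul_add, add_mul,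
      mul_one, S_mul_S, add_comm]
    simp only [Matrix.mul_assoc, S]
  have posDef : (S * (U * Uᵀ + 1) * S).PosDef := conj_eq ▸
    (PosDef.diagonal fun i ↦ inv_pos.2 (hb i)).add_posSemidef (posSemidef_self_mul_conjTranspose _)
  have inv_eq := inv_diagonal_of_ne_zero fun i ↦ (hb i).ne'
  refine ⟨posDef.isHermitian.eigenvalues ∘ Tuple.sort posDef.isHermitian.eigenvalues,
    (isGenEigs_eigenvalues (S_mul_S.trans inv_eq.symm) _).comp_perm _,
    fun i ↦ posDef.eigenvalues_pos _, fun k l ↦ ?_⟩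
  refine eigenvalues_sort_le_of_rank_sub_diagonal_le posDef.isHermitian
    (fun i j hij ↦ inv_anti₀ (hb j) (hanti hij)) ?_
  rw [conj_eq, RCLike.ofReal_real_eq_id]
  simp only [id, add_sub_cancel_left]
  exact (rank_mul_le_left _ _).trans (rank_le_card_width _)

end Pencil

section DiagonalGram

theorem sum_smul_vecMulVec_single {ι R : Type*} [DecidableEq ι] [NonAssocSemiring R]
    (s : Finset ι) (a : ι → R) :
    ∑ i ∈ s, a i • vecMulVec (Pi.single i 1) (Pi.single i 1) =
      diagonal fun i ↦ if i ∈ s then a i else 0 := by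
  ext i j
  simp only [← single_eq_single_vecMulVec_single, Matrix.sum_apply, Matrix.smul_apply,
    single_apply, diagonal_apply, smul_eq_mul, mul_ite, mul_one, mul_zero, ite_and]
  obtain rfl | hij := eq_or_ne i j <;> simp [*]

theorem exists_mul_transpose_eq_diagonal {n : ℕ} (r : ℕ) {a : Fin n → ℝ} (ha : ∀ i, 0 ≤ a i) :
    ∃ U : Matrix (Fin n) (Fin r) ℝ,
      U * Uᵀ = diagonal fun i : Fin n ↦ if (i : ℕ) < r then a i else 0 := by
  refine ⟨of fun i j ↦ if (i : ℕ) = j then √(a i) else 0, ?_⟩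
  ext i j
  simp only [mul_apply, of_apply, transpose_apply, diagonal_apply, ite_mul, zero_mul]
  by_cases hi : (i : ℕ) < r
  · have eq_iff (l : Fin r) : (i : ℕ) = l ↔ ⟨i, hi⟩ = l := by rw [Fin.ext_iff]
    simp only [eq_iff, Finset.sum_ite_eq, Finset.mem_univ, if_true]
    obtain rfl | hij := eq_or_ne i j
    · simp [hi, Real.mul_self_sqrt (ha i)]
    · simp [hij, Fin.val_inj, hij.symm]
  · have ne (l : Fin r) : (i : ℕ) ≠ l := by omega
    simp [hi, ne]

end DiagonalGram

section CostComparison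

theorem exists_perm_lt_or_eq_add (n r : ℕ) :
    ∃ e : Equiv.Perm (Fin n), ∀ k, (e k : ℕ) < r ∨ (e k : ℕ) = k + r := by
  obtain rfl | hn := eq_or_ne n 0
  · exact ⟨1, fun k ↦ k.elim0⟩
  have : NeZero n := ⟨hn⟩
  refine ⟨Equiv.addRight (Fin.ofNat n r), fun k ↦ ?_⟩
  have val_eq : ((k + Fin.ofNat n r : Fin n) : ℕ) = (k + r) % n := by simp [Fin.val_add]
  rw [Equiv.coe_addRight, val_eq]
  obtain hk | hk := lt_or_ge (k + r : ℕ) n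
  · exact Or.inr (Nat.mod_eq_of_lt hk)
  · have := Nat.mod_le (k + r - n) n
    rw [Nat.mod_eq_sub_mod hk]
    omega

variable {f : ℝ → ℝ}

theorem sum_ite_lt_le_sum {n r : ℕ} (hanti : AntitoneOn f (Set.Ioc 0 1))
    (hmono : MonotoneOn f (Set.Ici 1)) {b t : Fin n → ℝ} (hb : ∀ i, b i ≤ 1) (ht : ∀ i, 0 < t i)
    (htb : ∀ k l : Fin n, (k : ℕ) + r ≤ l → t k ≤ b l) :
    ∑ i : Fin n, f (if (i : ℕ) < r then 1 else b i) ≤ ∑ i, f (t i) := by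
  have one_le (x : ℝ) (hx : 0 < x) : f 1 ≤ f x := by
    obtain h | h := le_total x 1
    · exact hanti ⟨hx, h⟩ ⟨one_pos, le_rfl⟩ h
    · exact hmono Set.self_mem_Ici h h
  obtain ⟨e, he⟩ := exists_perm_lt_or_eq_add n r
  rw [← Equiv.sum_comp e]
  refine Finset.sum_le_sum fun k _ ↦ ?_
  split_ifs with hk
  · exact one_le _ (ht k)
  · have le := htb k (e k) ((he k).resolve_left hk).ge
    exact hanti ⟨ht k, le.trans (hb _)⟩ ⟨(ht k).trans_le le, hb _⟩ le

theorem MemU.antitoneOn (hf : MemU f) : AntitoneOn f (Set.Ioc 0 1) := by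
  obtain ⟨f', hderiv, -, hsign, -⟩ := hf
  refine antitoneOn_of_hasDerivWithinAt_nonpos (f' := f') (convex_Ioc 0 1)
    (fun x hx ↦ (hderiv x hx.1).continuousAt.continuousWithinAt) ?_ ?_ <;>
    rw [interior_Ioc] <;> rintro x ⟨hx0, hx1⟩
  · exact (hderiv x hx0).hasDerivWithinAt
  · exact (neg_of_mul_neg_left (hsign x hx0 hx1.ne) (sub_pos.2 hx1).le).le

theorem MemU.monotoneOn (hf : MemU f) : MonotoneOn f (Set.Ici 1) := by
  obtain ⟨f', hderiv, -, hsign, -⟩ := hf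
  have pos {x : ℝ} (hx : 1 ≤ x) : 0 < x := one_pos.trans_le hx
  refine monotoneOn_of_hasDerivWithinAt_nonneg (f' := f') (convex_Ici 1)
    (fun x hx ↦ (hderiv x (pos hx)).continuousAt.continuousWithinAt) ?_ ?_ <;>
    rw [interior_Ici] <;> intro x (hx : 1 < x)
  · exact (hderiv x (pos hx.le)).hasDerivWithinAt
  · exact (pos_of_mul_neg_left (hsign x (pos hx.le) hx.ne') (sub_nonpos.2 hx.le)).le

end CostComparison

theorem approximation_lemma_existence_general {n : ℕ} (r : ℕ)
    {dsq : Fin n → ℝ} (hd : ∀ i, 0 ≤ dsq i) (hord : Antitone dsq)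
    {f : ℝ → ℝ} (hanti : AntitoneOn f (Set.Ioc 0 1)) (hmono : MonotoneOn f (Set.Ici 1)) :
    ∃ Uhat : Matrix (Fin n) (Fin r) ℝ,
      (Uhat * Uhatᵀ = ∑ i ∈ Finset.univ.filter (fun i : Fin n => (i : ℕ) < r),
        dsq i • vecMulVec (Pi.single i (1:ℝ)) (Pi.single i (1:ℝ))) ∧
      ∀ U : Matrix (Fin n) (Fin r) ℝ, ∀ σ σ' : Fin n → ℝ,
        IsGenEigs (Uhat * Uhatᵀ + 1) (Matrix.diagonal dsq + 1) σ →
        IsGenEigs (U * Uᵀ + 1) (Matrix.diagonal dsq + 1) σ' →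
        ∑ i, f (σ i) ≤ ∑ i, f (σ' i) := by
  have hpos (i : Fin n) : 0 < dsq i + 1 := by linarith [hd i]
  obtain ⟨Uhat, hU⟩ := exists_mul_transpose_eq_diagonal r hd
  refine ⟨Uhat, by simp [hU, sum_smul_vecMulVec_single], fun U σ σ' hσ hσ' ↦ ?_⟩
  have diagonal_add_one (a : Fin n → ℝ) : diagonal a + 1 = diagonal fun i ↦ a i + 1 := by
    rw [← diagonal_one, diagonal_add]
  rw [hU, diagonal_add_one, diagonal_add_one] at hσ
  rw [diagonal_add_one] at hσ'
  obtain ⟨τ, hτ, τ_pos, τ_le⟩ := exists_isGenEigs_le_inv U hpos (hord.add_const 1)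
  rw [Fintype.card_fin] at τ_le
  calc ∑ i, f (σ i)
      = ∑ i : Fin n, f (if (i : ℕ) < r then 1 else (dsq i + 1)⁻¹) := by
        rw [hσ.sum_comp_eq (isGenEigs_diagonal _ fun i ↦ (hpos i).ne')]
        refine Finset.sum_congr rfl fun i _ ↦ ?_
        split_ifs <;> simp [(hpos i).ne']
    _ ≤ ∑ i, f (τ i) := sum_ite_lt_le_sum hanti hmono
        (fun i ↦ inv_le_one_of_one_le₀ (le_add_of_nonneg_left (hd i))) τ_pos τ_le
    _ = ∑ i, f (σ' i) := hτ.sum_comp_eq hσ' f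

/-- Lemma A.1 (i) (approximation lemma): the functional
`𝒥(U) = Σᵢ f(σᵢ)`, with `σᵢ` the generalized eigenvalues of `(U Uᵀ + I, D + I)`, attains
a global minimum, and there is a minimizer `Û` with `Û Ûᵀ = Σ_{i≤r} dᵢ² eᵢ eᵢᵀ`. -/
theorem approximation_lemma_existence
    (n r : ℕ) (hn : 0 < n) (hrpos : 0 < r) (hr : r ≤ n)
    (dsq : Fin n → ℝ) (hd : ∀ i, 0 ≤ dsq i) (hord : Antitone dsq)
    (f : ℝ → ℝ) (hf : MemU f) :
    ∃ Uhat : Matrix (Fin n) (Fin r) ℝ,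
      (Uhat * Uhatᵀ = ∑ i ∈ Finset.univ.filter (fun i : Fin n => (i : ℕ) < r),
        dsq i • vecMulVec (Pi.single i (1:ℝ)) (Pi.single i (1:ℝ))) ∧
      ∀ U : Matrix (Fin n) (Fin r) ℝ, ∀ σ σ' : Fin n → ℝ,
        IsGenEigs (Uhat * Uhatᵀ + 1) (Matrix.diagonal dsq + 1) σ →
        IsGenEigs (U * Uᵀ + 1) (Matrix.diagonal dsq + 1) σ' →
        ∑ i, f (σ i) ≤ ∑ i, f (σ' i) := by
  exact approximation_lemma_existence_general r hd hord hf.antitoneOn hf.monotoneOn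
end
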